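/- Let X be a K-convex complex Banach space and p ∈ (1,∞). Then there exist c, C ∈ (0,∞) and η ∈ (1/2, 1] such that for every n,d ∈ ℕ with 1 ≤ d ≤ n, every function f : {-1,1}^n → X of degree at most d satisfies, for all t ≥ 0, ‖e^{-tΔ} f‖_{L_p({-1,1}^n;X)} ≥ c e^{-C·d·max{t, t^η}} · ‖f‖_{L_p({-1,1}^n;X)}. -/

import Mathlib

open scoped BigOperators ENNReal NNReal

noncomputable section

namespace HammingCube

variable {X : Type*} [NormedAddCommGroup X] [NormedSpace ℂ X]

/-- The sign ±1 associated to a boolean coordinate. -/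
def sgn (b : Bool) : ℝ := if b then 1 else -1

/-- The Walsh function `w_A(ε) = ∏_{i ∈ A} ε_i`. -/
def walsh {n : ℕ} (A : Finset (Fin n)) (ε : Fin n → Bool) : ℝ := ∏ i ∈ A, sgn (ε i)

/-- The Fourier–Walsh coefficient `f̂(A) = 2⁻ⁿ ∑_δ f(δ) w_A(δ)`. -/
def coeff {n : ℕ} (f : (Fin n → Bool) → X) (A : Finset (Fin n)) : X :=
  (2 ^ n : ℝ)⁻¹ • ∑ δ : Fin n → Bool, walsh A δ • f δ

/-- `f` has degree at most `d`: `f̂(A) = 0` whenever `|A| > d`. -/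
def degLE {n : ℕ} (f : (Fin n → Bool) → X) (d : ℕ) : Prop :=
  ∀ A : Finset (Fin n), d < A.card → coeff f A = 0

/-- `f` belongs to the `d`-th tail space: `f̂(A) = 0` whenever `|A| < d`. -/
def tailSpace {n : ℕ} (f : (Fin n → Bool) → X) (d : ℕ) : Prop :=
  ∀ A : Finset (Fin n), A.card < d → coeff f A = 0

/-- The heat semigroup `e^{-tΔ} f = ∑_A e^{-t|A|} f̂(A) w_A`. -/
def heat {n : ℕ} (t : ℝ) (f : (Fin n → Bool) → X) : (Fin n → Bool) → X :=
  fun ε => ∑ A : Finset (Fin n), Real.exp (-t * A.card) • walsh A ε • coeff f A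

/-- The hypercube Laplacian `Δ f = ∑_A |A| f̂(A) w_A`. -/
def lap {n : ℕ} (f : (Fin n → Bool) → X) : (Fin n → Bool) → X :=
  fun ε => ∑ A : Finset (Fin n), (A.card : ℝ) • walsh A ε • coeff f A

/-- The fractional Laplacian `Δ^γ f = ∑_A |A|^γ f̂(A) w_A`. -/
def fracLap {n : ℕ} (γ : ℝ) (f : (Fin n → Bool) → X) : (Fin n → Bool) → X :=
  fun ε => ∑ A : Finset (Fin n), ((A.card : ℝ) ^ γ) • walsh A ε • coeff f A

/-- The `i`-th discrete partial derivative. -/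
def pderiv {n : ℕ} (i : Fin n) (f : (Fin n → Bool) → X) : (Fin n → Bool) → X :=
  fun ε => (2 : ℝ)⁻¹ • (f ε - f (Function.update ε i (!(ε i))))

/-- The vector-valued `L_p` norm `(2⁻ⁿ ∑_ε ‖f(ε)‖^p)^{1/p}` for finite `p`. -/
def lpNorm {n : ℕ} {Y : Type*} [NormedAddCommGroup Y] (p : ℝ)
    (f : (Fin n → Bool) → Y) : ℝ :=
  ((2 ^ n : ℝ)⁻¹ * ∑ ε : Fin n → Bool, ‖f ε‖ ^ p) ^ (1 / p)

/-- The `L_∞` norm `max_ε ‖f(ε)‖`. -/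
def linfNorm {n : ℕ} {Y : Type*} [NormedAddCommGroup Y]
    (f : (Fin n → Bool) → Y) : ℝ :=
  ⨆ ε : Fin n → Bool, ‖f ε‖

/-- The `L_p` norm for `p ∈ [1,∞]` encoded as `p : ℝ≥0∞`. -/
def lpNormE {n : ℕ} {Y : Type*} [NormedAddCommGroup Y] (p : ℝ≥0∞)
    (f : (Fin n → Bool) → Y) : ℝ :=
  if p = ⊤ then linfNorm f else lpNorm p.toReal f

/-- The scalar `L_p` norm of the gradient `‖(∑_i |∂_i f|²)^{1/2}‖_{L_p}`. -/
def gradLpNorm {n : ℕ} (p : ℝ) (f : (Fin n → Bool) → ℂ) : ℝ :=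
  lpNorm p (fun ε => Real.sqrt (∑ i : Fin n, ‖pderiv i f ε‖ ^ 2))

/-- The Rademacher projection `Rad f(ε) = ∑_i f̂({i}) ε_i`. -/
def Rad {n : ℕ} (f : (Fin n → Bool) → X) : (Fin n → Bool) → X :=
  fun ε => ∑ i : Fin n, sgn (ε i) • coeff f {i}

/-- A complex Banach space is `K`-convex if the Rademacher projections are uniformly
bounded on `L_q` for some `q ∈ (1,∞)`. -/
def KConvex (X : Type*) [NormedAddCommGroup X] [NormedSpace ℂ X] : Prop :=
  ∃ q : ℝ, 1 < q ∧ ∃ M : ℝ, ∀ (n : ℕ) (f : (Fin n → Bool) → X),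
    lpNorm q (Rad f) ≤ M * lpNorm q f

/-- `X` has cotype `q` with constant `C`. -/
def HasCotype (X : Type*) [NormedAddCommGroup X] [NormedSpace ℂ X] (q C : ℝ) : Prop :=
  ∀ (n : ℕ) (x : Fin n → X),
    C⁻¹ * (∑ i : Fin n, ‖x i‖ ^ q) ^ (1 / q) ≤
      ((2 ^ n : ℝ)⁻¹ * ∑ ε : Fin n → Bool, ‖∑ i : Fin n, sgn (ε i) • x i‖ ^ q) ^ (1 / q)

/-- The entropy `Ent(h)` of a nonnegative function on the cube. -/
def entropy {n : ℕ} (h : (Fin n → Bool) → ℝ) : ℝ :=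
  (2 ^ n : ℝ)⁻¹ * ∑ ε : Fin n → Bool, h ε * Real.log (h ε) -
    ((2 ^ n : ℝ)⁻¹ * ∑ ε : Fin n → Bool, h ε) *
      Real.log ((2 ^ n : ℝ)⁻¹ * ∑ ε : Fin n → Bool, h ε)

/-- The `L_∞` norm of the gradient `max_ε (∑_i |∂_i f(ε)|²)^{1/2}`. -/
def gradLinfNorm {n : ℕ} (f : (Fin n → Bool) → ℂ) : ℝ :=
  ⨆ ε : Fin n → Bool, Real.sqrt (∑ i : Fin n, ‖pderiv i f ε‖ ^ 2)



/-- The region `⋃_{t ≥ 0} closedBall t (δ t)`, a sector in disguise. -/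
def Sect (δ : ℝ) : Set ℂ := {z | ∃ t : ℝ, 0 ≤ t ∧ ‖z - t‖ ≤ δ * t}

lemma expPoly_growth {Y : Type*} [NormedAddCommGroup Y] [NormedSpace ℂ Y]
    (δ : ℝ) (hδ : 0 < δ) (d : ℕ) (g : ℕ → Y) (M : ℝ)
    (hM : ∀ z ∈ Sect δ, ‖∑ k ∈ Finset.range (d+1), Complex.exp (-(k * z)) • g k‖ ≤ M)
    (z : ℂ) (hz : ‖z‖ ≤ 1) (hδ1 : δ ≤ 1) :
    ‖∑ k ∈ Finset.range (d+1), Complex.exp (-(k * z)) • g k‖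
      ≤ Real.exp ((1 + Real.pi / δ) * d) * M := by
  set R := Real.pi / δ with hR
  have hR1 : 1 ≤ R := by
    rw [hR, le_div_iff₀ hδ]; linarith [Real.pi_gt_three]
  have hrel : ∀ z : ℂ, ∑ k ∈ Finset.range (d+1), (Complex.exp z) ^ (d - k) • g k
      = Complex.exp (d * z) • ∑ k ∈ Finset.range (d+1), Complex.exp (-(k * z)) • g k := by
    intro z
    rw [Finset.smul_sum]
    refine Finset.sum_congr rfl fun k hk => ?_
    have hk' : k ≤ d := by simpa [Nat.lt_succ_iff] using hk
    rw [smul_smul, ← Complex.exp_add, ← Complex.exp_nat_mul]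
    congr 2
    push_cast [Nat.cast_sub hk']
    ring
  have key : ∀ u ∈ closure (Metric.ball (0:ℂ) (Real.exp R)),
      ‖∑ k ∈ Finset.range (d+1), u ^ (d - k) • g k‖ ≤ Real.exp (d * R) * M := by
    intro u hu
    refine Complex.norm_le_of_forall_mem_frontier_norm_le (f := fun u : ℂ => ∑ k ∈ Finset.range (d+1), u ^ (d - k) • g k)
      (U := Metric.ball (0:ℂ) (Real.exp R)) Metric.isBounded_ball ?_ ?_ hu
    · apply Differentiable.diffContOnCl
      fun_prop
    · intro u hu
      rw [frontier_ball _ (Real.exp_pos R).ne'] at hu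
      have hu' : ‖u‖ = Real.exp R := by simpa using hu
      have hu0 : u ≠ 0 := by
        intro h; rw [h, norm_zero] at hu'; exact (Real.exp_pos R).ne hu'
      have h1 : u = Complex.exp (R + Complex.arg u * Complex.I) := by
        rw [Complex.exp_add, ← Complex.ofReal_exp, ← hu', Complex.norm_mul_exp_arg_mul_I]
      have h2 := hrel (R + Complex.arg u * Complex.I)
      rw [← h1] at h2
      show ‖∑ k ∈ Finset.range (d+1), u ^ (d - k) • g k‖ ≤ _
      rw [h2, norm_smul, Complex.norm_exp]
      have h3 : ((d:ℂ) * (R + Complex.arg u * Complex.I)).re = d * R := by simp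
      rw [h3]
      refine mul_le_mul_of_nonneg_left (hM _ ⟨R, by linarith, ?_⟩) (Real.exp_pos _).le
      have : δ * R = Real.pi := by rw [hR]; field_simp
      rw [this]
      simpa using Complex.abs_arg_le_pi u
  have h4 : Complex.exp z ∈ closure (Metric.ball (0:ℂ) (Real.exp R)) := by
    rw [closure_ball _ (Real.exp_pos R).ne']
    simp only [Metric.mem_closedBall, dist_zero_right, Complex.norm_exp, Real.exp_le_exp]
    exact (Complex.re_le_norm z).trans (hz.trans hR1)
  have h5 := key _ h4
  rw [hrel, norm_smul, Complex.norm_exp] at h5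
  have h6 : ((d:ℂ) * z).re = d * z.re := by simp
  rw [h6] at h5
  have h7 : -1 ≤ z.re := by
    have := (abs_le.1 ((Complex.abs_re_le_norm z).trans hz)).1
    exact this
  have h8 : 0 ≤ M := (norm_nonneg _).trans (hM 0 ⟨0, le_rfl, by simp⟩)
  have h9 : ∀ x : ℝ, Real.exp (d * z.re) * x ≤ Real.exp (d * R) * M →
      x ≤ Real.exp ((1 + R) * d) * M := by
    intro x hx
    have e1 : x = Real.exp (-(d * z.re)) * (Real.exp (d * z.re) * x) := by
      rw [← mul_assoc, ← Real.exp_add]; simp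
    rw [e1]
    calc _ ≤ Real.exp (-(d * z.re)) * (Real.exp (d * R) * M) := by gcongr
      _ = Real.exp (-(d * z.re) + d * R) * M := by rw [Real.exp_add]; ring
      _ ≤ _ := by
        gcongr
        have : (0:ℝ) ≤ d := by positivity
        nlinarith
  exact h9 _ h5

lemma expPoly_bound.{u}
    (δ : ℝ) (hδ : 0 < δ) (hδ1 : δ ≤ 1) :
    ∃ C η : ℝ, 0 < C ∧ 1 / 2 < η ∧ η ≤ 1 ∧ ∀ (Y : Type u) [NormedAddCommGroup Y] [NormedSpace ℂ Y]
    (d : ℕ) (g : ℕ → Y) (M : ℝ),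
    (∀ z ∈ Sect δ, ‖∑ k ∈ Finset.range (d+1), Complex.exp (-(k * z)) • g k‖ ≤ M) →
    ∀ t : ℝ, 0 < t → t < 1 →
    ‖∑ k ∈ Finset.range (d+1), Complex.exp (k * t) • g k‖ ≤ Real.exp (C * d * t ^ η) * M := by
  set a : ℝ := 2 - δ / Real.pi with ha
  have hpi := Real.pi_gt_three
  have hdp : δ / Real.pi ≤ 1 / 3 := by
    rw [div_le_div_iff₀ (by linarith) (by norm_num)]; linarith
  have hdp0 : 0 < δ / Real.pi := by positivity
  have hdpe : δ / Real.pi * Real.pi = δ := by field_simp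
  have ha1 : 1 < a := by linarith
  have ha2 : a < 2 := by linarith
  set c := Real.sin (δ / 4) with hc
  have hc0 : 0 < c := Real.sin_pos_of_pos_of_lt_pi (by positivity) (by linarith)
  refine ⟨(1 + Real.pi / δ) / c, 1 / a, by positivity, ?_, ?_, ?_⟩
  · rw [div_lt_div_iff₀ (by norm_num) (by linarith)]; linarith
  · rw [div_le_one (by linarith)]; linarith
  intro Y _ _ d g M hM t ht0 ht1
  have hM0 : 0 ≤ M := (norm_nonneg _).trans (hM 0 ⟨0, le_rfl, by simp⟩)
  set C := (1 + Real.pi / δ) / c with hC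
  have hC0 : 0 < C := by positivity
  set F : ℂ → Y := fun z => ∑ k ∈ Finset.range (d+1), Complex.exp (-(k * z)) • g k with hF
  have hFd : Differentiable ℂ F := by rw [hF]; fun_prop
  set U : Set ℂ := {v | ‖v‖ < 1 ∧ 0 < v.re} with hU
  have hUo : IsOpen U := by
    rw [hU]
    exact (isOpen_lt continuous_norm continuous_const).inter
      (isOpen_lt continuous_const Complex.continuous_re)
  have hUc : closure U ⊆ {v | ‖v‖ ≤ 1 ∧ 0 ≤ v.re} := by
    apply closure_minimal
    · rintro v ⟨h1, h2⟩; exact ⟨h1.le, h2.le⟩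
    · exact (isClosed_le continuous_norm continuous_const).inter
        (isClosed_le continuous_const Complex.continuous_re)
  set H : ℂ → Y := fun v => Complex.exp (-(C * d * v)) • F (-(v ^ (a : ℂ))) with hH
  -- membership in the sector for nearly vertical v
  have hsect : ∀ v : ℂ, v ≠ 0 → 0 ≤ v.re → Real.pi / 2 - δ / 4 ≤ |v.arg| → -(v ^ (a:ℂ)) ∈ Sect δ := by
    intro v hv hre harg
    have hle := Complex.abs_arg_le_pi_div_two_iff.2 hre
    have hpow : v ^ (a:ℂ) = ((‖v‖ ^ a : ℝ) : ℂ) * Complex.exp ((a * v.arg : ℝ) * Complex.I) := by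
      rw [Complex.cpow_def_of_ne_zero hv, Complex.log, add_mul, Complex.exp_add]
      rw [Real.rpow_def_of_pos (norm_pos_iff.2 hv)]
      push_cast
      congr 2
      ring
    have hr : 0 ≤ ‖v‖ ^ a := by positivity
    have main : ∃ ψ : ℝ, |ψ| ≤ δ ∧ -Complex.exp ((a * v.arg : ℝ) * Complex.I) = Complex.exp (Complex.I * ψ) := by
      rcases le_total 0 v.arg with h0 | h0
      · rw [abs_of_nonneg h0] at hle harg
        refine ⟨a * v.arg - Real.pi, ?_, ?_⟩
        · rw [abs_le]; constructor <;> nlinarith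
        · push_cast
          rw [mul_sub, Complex.exp_sub, mul_comm Complex.I (Real.pi:ℂ), Complex.exp_pi_mul_I]
          rw [div_neg, div_one, mul_comm]
      · rw [abs_of_nonpos h0] at hle harg
        refine ⟨a * v.arg + Real.pi, ?_, ?_⟩
        · rw [abs_le]; constructor <;> nlinarith
        · push_cast
          rw [mul_add, Complex.exp_add, mul_comm Complex.I (Real.pi:ℂ), Complex.exp_pi_mul_I]
          rw [mul_neg_one, mul_comm]
    obtain ⟨ψ, hψ, he⟩ := main
    refine ⟨‖v‖ ^ a, hr, ?_⟩
    have e2 : -(v ^ (a:ℂ)) - ((‖v‖ ^ a : ℝ) : ℂ)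
        = ((‖v‖ ^ a : ℝ) : ℂ) * (Complex.exp (Complex.I * ψ) - 1) := by
      rw [hpow, ← he]; ring
    rw [e2, norm_mul, Complex.norm_real, Real.norm_of_nonneg hr, mul_comm]
    gcongr
    exact (Real.norm_exp_I_mul_ofReal_sub_one_le).trans (by simpa using hψ)
  have hHb : ∀ v ∈ closure U, ‖H v‖ ≤ M := by
    intro v hv
    refine Complex.norm_le_of_forall_mem_frontier_norm_le (f := H) (U := U) ?_ ?_ ?_ hv
    · apply (Metric.isBounded_ball (x := (0:ℂ)) (r := 1)).subset
      rintro v ⟨h1, -⟩; simpa using h1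
    · refine ⟨?_, ?_⟩
      · rintro v ⟨-, h2⟩
        apply DifferentiableAt.differentiableWithinAt
        have h3 : DifferentiableAt ℂ (fun v : ℂ => v ^ (a:ℂ)) v :=
          differentiableAt_id.cpow_const (Or.inl h2)
        have h4 : DifferentiableAt ℂ (fun v : ℂ => F (-(v ^ (a:ℂ)))) v :=
          DifferentiableAt.comp (g := F) v (hFd _) h3.neg
        exact DifferentiableAt.smul (by fun_prop) h4
      · intro v hv
        obtain ⟨-, h2⟩ := hUc hv
        apply ContinuousAt.continuousWithinAt
        have h3 : ContinuousAt (fun v : ℂ => v ^ (a:ℂ)) v := by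
          by_cases hv0 : v = 0
          · subst hv0
            have := Complex.continuousAt_cpow_zero_of_re_pos (z := (a:ℂ)) (by simp; linarith)
            exact ContinuousAt.comp (f := fun v : ℂ => (v, (a:ℂ))) (g := fun x : ℂ × ℂ => x.1 ^ x.2) this (by fun_prop)
          · apply continuousAt_cpow_const
            rw [Complex.mem_slitPlane_iff]
            by_contra hcon
            push Not at hcon
            exact hv0 (Complex.ext (le_antisymm hcon.1 h2) hcon.2)
        have h4 : ContinuousAt (fun v : ℂ => F (-(v ^ (a:ℂ)))) v :=
          ContinuousAt.comp (g := F) (hFd.continuous.continuousAt) h3.neg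
        exact ContinuousAt.smul (by fun_prop) h4
    · intro v hv
      rw [frontier, hUo.interior_eq] at hv
      obtain ⟨hn, hre⟩ := hUc hv.1
      have hnot : ¬ (‖v‖ < 1 ∧ 0 < v.re) := hv.2
      have hexp : ‖Complex.exp (-(C * d * v))‖ = Real.exp (-(C * d * v.re)) := by
        rw [Complex.norm_exp]; congr 1
        have : (C * d * v : ℂ) = ((C * d : ℝ) : ℂ) * v := by push_cast; ring
        rw [Complex.neg_re, this, Complex.re_ofReal_mul]
      rw [hH]; simp only
      rw [norm_smul, hexp]
      by_cases hv0 : v = 0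
      · subst hv0
        rw [Complex.zero_cpow (by exact_mod_cast (by linarith : a ≠ 0))]
        simp only [Complex.zero_re, mul_zero, neg_zero, Real.exp_zero, one_mul]
        exact hM 0 ⟨0, le_rfl, by simp⟩
      by_cases harg : Real.pi / 2 - δ / 4 ≤ |v.arg|
      · have h1 := hM _ (hsect v hv0 hre harg)
        have h2 : Real.exp (-(C * d * v.re)) ≤ 1 := by
          rw [Real.exp_le_one_iff]
          have : 0 ≤ C * d * v.re := by positivity
          linarith
        calc _ ≤ 1 * M := by gcongr
          _ = M := one_mul M
      · push Not at harg
        have hcos : c ≤ Real.cos v.arg := by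
          rw [hc, ← Real.cos_pi_div_two_sub, ← Real.cos_abs v.arg]
          apply Real.cos_le_cos_of_nonneg_of_le_pi (abs_nonneg _) _ harg.le
          linarith
        have hre2 := Complex.norm_mul_cos_arg v
        have hvpos : 0 < ‖v‖ := norm_pos_iff.2 hv0
        have hv1 : ‖v‖ = 1 := by
          by_contra hne
          apply hnot
          refine ⟨lt_of_le_of_ne hn hne, ?_⟩
          rw [← hre2]; exact mul_pos hvpos (hc0.trans_le hcos)
        rw [hv1, one_mul] at hre2
        have hpn : ‖-(v ^ (a:ℂ))‖ ≤ 1 := by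
          rw [norm_neg, Complex.norm_cpow_real, hv1, Real.one_rpow]
        have h1 := expPoly_growth δ hδ d g M hM _ hpn hδ1
        calc _ ≤ Real.exp (-(C * d * v.re)) * (Real.exp ((1 + Real.pi / δ) * d) * M) := by gcongr
          _ = Real.exp (-(C * d * v.re) + (1 + Real.pi / δ) * d) * M := by rw [Real.exp_add]; ring
          _ ≤ 1 * M := by
            gcongr
            rw [Real.exp_le_one_iff]
            have e3 : (1 + Real.pi / δ) = C * c := by rw [hC]; field_simp
            rw [e3]
            have : C * d * c ≤ C * d * v.re := by
              gcongr; rw [← hre2]; exact hcos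
            linarith
          _ = M := one_mul M
  have htp : 0 < t ^ (1 / a) := Real.rpow_pos_of_pos ht0 _
  have htl : t ^ (1 / a) < 1 := Real.rpow_lt_one ht0.le ht1 (by positivity)
  have hmem : ((t ^ (1/a) : ℝ) : ℂ) ∈ closure U := by
    apply subset_closure
    refine ⟨?_, by simpa using htp⟩
    rw [Complex.norm_real, Real.norm_of_nonneg htp.le]; exact htl
  have hfin := hHb _ hmem
  have hpow : (((t ^ (1/a) : ℝ) : ℂ)) ^ (a:ℂ) = (t:ℂ) := by
    rw [← Complex.ofReal_cpow htp.le, ← Real.rpow_mul ht0.le]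
    rw [one_div, inv_mul_cancel₀ (by linarith), Real.rpow_one]
  rw [hH] at hfin
  simp only [hpow] at hfin
  rw [norm_smul, Complex.norm_exp] at hfin
  have hre : (-(C * d * ((t ^ (1/a) : ℝ) : ℂ)) : ℂ).re = -(C * d * t ^ (1/a)) := by
    rw [← Complex.ofReal_natCast, ← Complex.ofReal_mul, ← Complex.ofReal_mul, ← Complex.ofReal_neg, Complex.ofReal_re]
  rw [hre, Real.exp_neg, inv_mul_le_iff₀ (Real.exp_pos _)] at hfin
  rw [hF] at hfin
  simpa using hfin


section Analytic
set_option linter.unusedSectionVars false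
variable {ι : Type*} [Fintype ι] {B : Type*} [NormedRing B] [NormedAlgebra ℂ B]

/-- The semigroup associated with the exponents `κ`. -/
def semi (op : (ι → ℂ) →ₐ[ℂ] B) (κ : ι → ℝ) (z : ℂ) : B := op (fun i => Complex.exp (-(z * κ i)))

lemma semi_zero (op : (ι → ℂ) →ₐ[ℂ] B) (κ : ι → ℝ) : semi op κ 0 = 1 := by
  unfold semi
  rw [← map_one op]; congr 1; funext i; simp

lemma semi_add (op : (ι → ℂ) →ₐ[ℂ] B) (κ : ι → ℝ) (z w : ℂ) :
    semi op κ (z + w) = semi op κ z * semi op κ w := by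
  unfold semi
  rw [← map_mul]; congr 1; funext i; simp [← Complex.exp_add]; ring_nf

lemma semi_scale (op : (ι → ℂ) →ₐ[ℂ] B) (κ : ι → ℝ) (t : ℝ) (z : ℂ) :
    semi op (fun i => t * κ i) z = semi op κ (t * z) := by
  unfold semi
  congr 1; funext i; push_cast; ring_nf

lemma op_continuous (op : (ι → ℂ) →ₐ[ℂ] B) : Continuous op :=
  LinearMap.continuous_of_finiteDimensional op.toLinearMap

lemma semi_hasDeriv (op : (ι → ℂ) →ₐ[ℂ] B) (κ : ι → ℝ) (l : ℂ) (b : B) (u : ℝ) :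
    HasDerivAt (fun u : ℝ => Complex.exp (-(l * u)) • (semi op κ u * b))
      (-(Complex.exp (-(l * u)) • (semi op κ u * ((op (fun i => l + κ i)) * b)))) u := by
  let L : (ι → ℂ) →L[ℝ] B := (LinearMap.toContinuousLinearMap op.toLinearMap).restrictScalars ℝ
  have hL : ∀ m, L m = op m := fun m => rfl
  have h1 : HasDerivAt (fun u : ℝ => (fun i => Complex.exp (-((l + κ i) * u)) : ι → ℂ))
      (fun i => -((l + κ i) * Complex.exp (-((l + κ i) * u)))) u := by
    rw [hasDerivAt_pi]
    intro i
    have h2 : HasDerivAt (fun x : ℝ => (x : ℂ)) 1 u := Complex.ofRealCLM.hasDerivAt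
    have h3 := ((h2.const_mul (l + κ i)).neg).cexp
    refine h3.congr_deriv ?_
    simp only [mul_one, Pi.neg_apply]
    ring
  have h4 := L.hasFDerivAt.comp_hasDerivAt u h1
  have h5 := h4.mul_const b
  convert h5 using 1
  · funext u
    simp only [Function.comp, hL, semi]
    rw [← smul_mul_assoc, ← map_smul]
    congr 2
    funext i
    simp [← Complex.exp_add]; ring_nf
  · rw [hL, ← smul_mul_assoc, ← mul_assoc, ← neg_mul, semi, smul_mul_assoc, ← map_mul, ← map_smul, ← map_neg]
    congr 2
    funext i
    simp only [Pi.neg_apply, Pi.smul_apply, Pi.mul_apply, smul_eq_mul]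
    rw [show -((l + κ i) * (u:ℂ)) = -(l * u) + -(u * κ i) by ring, Complex.exp_add]
    ring

lemma semi_mvt (op : (ι → ℂ) →ₐ[ℂ] B) (κ : ι → ℝ) (hT : ∀ t : ℝ, 0 ≤ t → ‖semi op κ t‖ ≤ 1)
    (l : ℂ) (hl : 0 ≤ l.re) (b : B) (t : ℝ) (ht : 0 ≤ t) :
    ‖b - Complex.exp (-(l * t)) • (semi op κ t * b)‖ ≤ t * ‖op (fun i => l + κ i) * b‖ := by
  have h := norm_image_sub_le_of_norm_deriv_le_segment' (a := 0) (b := t)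
    (C := ‖op (fun i => l + κ i) * b‖)
    (fun x _ => (semi_hasDeriv op κ l b x).hasDerivWithinAt) ?_ t ⟨ht, le_rfl⟩
  · simp only [Complex.ofReal_zero, mul_zero, neg_zero, Complex.exp_zero, one_smul, semi_zero,
      one_mul, sub_zero] at h
    rw [norm_sub_rev, mul_comm t]; exact h
  · intro x hx
    rw [norm_neg, norm_smul, Complex.norm_exp]
    have h1 : (-(l * x)).re ≤ 0 := by simp; exact mul_nonneg hl hx.1
    calc _ ≤ 1 * (‖semi op κ x‖ * ‖op (fun i => l + κ i) * b‖) := by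
          gcongr
          · exact Real.exp_le_one_iff.2 h1
          · exact norm_mul_le _ _
      _ ≤ 1 * (1 * ‖op (fun i => l + κ i) * b‖) := by
          gcongr; exact hT x hx.1
      _ = _ := by ring

/-- The constant for the resolvent estimate. -/
def c0 (N : ℕ) (β : ℝ) : ℝ := (2 + 3 * Real.pi * (N * 2 ^ N) / β)⁻¹

lemma semi_neumann (op : (ι → ℂ) →ₐ[ℂ] B) (κ : ι → ℝ) (hT : ∀ t : ℝ, 0 ≤ t → ‖semi op κ t‖ ≤ 1)
    (N : ℕ) (β : ℝ) (hN : ∀ t : ℝ, 0 ≤ t → ‖(1 - semi op κ t) ^ N‖ ≤ 2 ^ N - β)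
    (b : B) (t : ℝ) (ht : 0 ≤ t) : β * ‖b‖ ≤ N * 2 ^ N * ‖b + semi op κ t * b‖ := by
  set T := semi op κ t with hTdef
  have h1 : ‖(1:B)‖ ≤ 1 := by
    have := hT 0 le_rfl; simpa [semi_zero] using this
  have h2 : ‖(1:B) - T‖ ≤ 2 := (norm_sub_le _ _).trans (by linarith [hT t ht])
  have h2' : ‖(2:B)‖ ≤ 2 := by
    rw [← one_add_one_eq_two]; exact (norm_add_le _ _).trans (by linarith)
  have hcomm : Commute (2:B) (1 - T) := Commute.ofNat_left 2 (1 - T)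
  have h3 := hcomm.geom_sum₂_mul N
  have h4 : (2:B) - (1 - T) = 1 + T := by
    rw [← one_add_one_eq_two]; abel
  rw [h4] at h3
  set G := ∑ i ∈ Finset.range N, (2:B) ^ i * (1 - T) ^ (N - 1 - i) with hG
  have hpow : ∀ (x : B) (k : ℕ), ‖x‖ ≤ 2 → ‖x ^ k‖ ≤ 2 ^ k := by
    intro x k hx
    induction k with
    | zero => simpa using h1
    | succ k ih =>
      rw [pow_succ, pow_succ]
      exact (norm_mul_le _ _).trans (by gcongr)
  have hGn : ‖G‖ ≤ N * 2 ^ N := by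
    calc ‖G‖ ≤ ∑ i ∈ Finset.range N, (2:ℝ) ^ N := by
          apply norm_sum_le_of_le
          intro i hi
          refine (norm_mul_le _ _).trans ?_
          calc _ ≤ (2:ℝ) ^ i * 2 ^ (N - 1 - i) := by
                gcongr
                · exact hpow _ _ h2'
                · exact hpow _ _ h2
            _ = 2 ^ (i + (N - 1 - i)) := by rw [pow_add]
            _ ≤ 2 ^ N := by
                apply pow_le_pow_right₀ (by norm_num)
                have := Finset.mem_range.1 hi
                omega
      _ = _ := by simp
  have h5 : (2:B) ^ N * b = G * (b + T * b) + (1 - T) ^ N * b := by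
    have : G * (b + T * b) = G * (1 + T) * b := by rw [mul_assoc, add_mul, one_mul]
    rw [this, h3]; rw [sub_mul]; abel
  have h6 : (2:B) ^ N * b = ((2:ℂ) ^ N) • b := by
    rw [Algebra.smul_def, map_pow, map_ofNat]
  have h7 : ‖(2:B) ^ N * b‖ = 2 ^ N * ‖b‖ := by
    rw [h6, norm_smul]; simp
  have h8 : 2 ^ N * ‖b‖ ≤ N * 2 ^ N * ‖b + T * b‖ + (2 ^ N - β) * ‖b‖ := by
    rw [← h7, h5]
    refine (norm_add_le _ _).trans ?_
    gcongr
    · exact (norm_mul_le _ _).trans (by gcongr)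
    · exact (norm_mul_le _ _).trans (by gcongr; exact hN t ht)
  linarith

lemma semi_resolvent (op : (ι → ℂ) →ₐ[ℂ] B) (κ : ι → ℝ) (hT : ∀ t : ℝ, 0 ≤ t → ‖semi op κ t‖ ≤ 1)
    (N : ℕ) (β : ℝ) (hβ : 0 < β) (hN : ∀ t : ℝ, 0 ≤ t → ‖(1 - semi op κ t) ^ N‖ ≤ 2 ^ N - β)
    (l : ℂ) (hl : 0 < l.re) (b : B) :
    c0 N β * ‖l‖ * ‖b‖ ≤ ‖op (fun i => l + κ i) * b‖ := by
  set r := ‖op (fun i => l + κ i) * b‖ with hr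
  have h1 : l.re * ‖b‖ ≤ 2 * r := by
    have h := semi_mvt op κ hT l hl.le b (1 / l.re) (by positivity)
    have hn : ‖Complex.exp (-(l * (1 / l.re : ℝ))) • (semi op κ (1 / l.re : ℝ) * b)‖ ≤ 1 / 2 * ‖b‖ := by
      rw [norm_smul, Complex.norm_exp]
      have e1 : (-(l * (1 / l.re : ℝ))).re = -1 := by
        rw [Complex.neg_re, Complex.re_mul_ofReal]; field_simp
      rw [e1]
      have e2 : Real.exp (-1) ≤ 1 / 2 := by
        rw [Real.exp_neg, ← one_div]
        apply one_div_le_one_div_of_le (by norm_num)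
        have := Real.add_one_le_exp 1; linarith
      gcongr
      calc _ ≤ ‖semi op κ (1 / l.re : ℝ)‖ * ‖b‖ := norm_mul_le _ _
        _ ≤ 1 * ‖b‖ := by gcongr; exact hT _ (by positivity)
        _ = _ := one_mul _
    have h2 := norm_sub_norm_le b (Complex.exp (-(l * (1 / l.re : ℝ))) • (semi op κ (1 / l.re : ℝ) * b))
    have h3 : 1 / 2 * ‖b‖ ≤ 1 / l.re * r := by linarith
    have h4 : l.re * (1 / 2 * ‖b‖) ≤ l.re * (1 / l.re * r) := by gcongr
    have h5 : l.re * (1 / l.re * r) = r := by field_simp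
    linarith
  have h2 : β * (|l.im| * ‖b‖) ≤ 3 * Real.pi * (N * 2 ^ N) * r := by
    by_cases him : l.im = 0
    · rw [him]; simp; positivity
    have hpos : 0 < |l.im| := abs_pos.2 him
    set t := Real.pi / |l.im| with ht
    have ht0 : 0 ≤ t := by positivity
    have h := semi_mvt op κ hT (l.im * Complex.I) (by simp) b t ht0
    have he : Complex.exp (-(l.im * Complex.I * t)) = -1 := by
      rcases abs_cases l.im with ⟨h1, _⟩ | ⟨h1, _⟩
      · have : (-(l.im * Complex.I * t) : ℂ) = -(Real.pi * Complex.I) := by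
          rw [ht, h1]; push_cast
          have : (l.im : ℂ) ≠ 0 := by exact_mod_cast him
          field_simp
        rw [this, Complex.exp_neg, Complex.exp_pi_mul_I]; norm_num
      · have : (-(l.im * Complex.I * t) : ℂ) = (Real.pi * Complex.I) := by
          rw [ht, h1]; push_cast
          have : (l.im : ℂ) ≠ 0 := by exact_mod_cast him
          field_simp
        rw [this, Complex.exp_pi_mul_I]
    rw [he, neg_one_smul, sub_neg_eq_add] at h
    have h3 := semi_neumann op κ hT N β hN b t ht0
    have h4 : op (fun i => l.im * Complex.I + κ i) * b = op (fun i => l + κ i) * b - (l.re : ℂ) • b := by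
      have : (fun i => l.im * Complex.I + κ i : ι → ℂ) = (fun i => l + κ i) - (l.re : ℂ) • 1 := by
        funext i; simp
        nth_rewrite 2 [← Complex.re_add_im l]; ring
      rw [this, map_sub, map_smul, map_one, sub_mul, smul_mul_assoc, one_mul]
    have h5 : ‖op (fun i => l.im * Complex.I + κ i) * b‖ ≤ 3 * r := by
      rw [h4]
      refine (norm_sub_le _ _).trans ?_
      rw [norm_smul, Complex.norm_real, Real.norm_of_nonneg hl.le]; linarith
    have h6 : β * ‖b‖ ≤ N * 2 ^ N * (t * (3 * r)) := by
      refine h3.trans ?_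
      gcongr
      exact h.trans (by gcongr)
    have h7 : |l.im| * t = Real.pi := by rw [ht]; field_simp
    calc β * (|l.im| * ‖b‖) = |l.im| * (β * ‖b‖) := by ring
      _ ≤ |l.im| * (N * 2 ^ N * (t * (3 * r))) := by gcongr
      _ = (|l.im| * t) * (N * 2 ^ N * ((3 * r))) := by ring
      _ = _ := by rw [h7]; ring
  have h3 : ‖l‖ ≤ l.re + |l.im| := by
    have := Complex.norm_le_abs_re_add_abs_im l
    rwa [abs_of_pos hl] at this
  have h4 : ‖l‖ * ‖b‖ ≤ (2 + 3 * Real.pi * (N * 2 ^ N) / β) * r := by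
    have h5 : |l.im| * ‖b‖ ≤ 3 * Real.pi * (N * 2 ^ N) / β * r := by
      rw [div_mul_eq_mul_div, le_div_iff₀ hβ]; linarith
    calc _ ≤ (l.re + |l.im|) * ‖b‖ := by gcongr
      _ ≤ _ := by linarith
  unfold c0
  rw [mul_assoc, inv_mul_le_iff₀ (by positivity)]
  exact h4

end Analytic
open MeasureTheory Filter Topology in
lemma int_sq_exp_aux (μ : ℂ) (hμ : 0 < μ.re) :
    IntegrableOn (fun x : ℝ => (x:ℂ) ^ 2 * Complex.exp (-(μ * x))) (Set.Ioi 0) := by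
  have h := integrableOn_rpow_mul_exp_neg_mul_rpow (p := 1) (s := 2) (b := μ.re) (by norm_num) (by norm_num) hμ
  refine Integrable.mono' h (by fun_prop) ?_
  refine (ae_restrict_iff' measurableSet_Ioi).2 (Eventually.of_forall fun x hx => ?_)
  rw [norm_mul, Complex.norm_exp]
  simp

open MeasureTheory Filter Topology in
lemma int_sq_exp (μ : ℂ) (hμ : 0 < μ.re) :
    ∫ x in Set.Ioi (0:ℝ), (x:ℂ) ^ 2 * Complex.exp (-(μ * x)) = 2 / μ ^ 3 := by
  have hμ0 : μ ≠ 0 := by rintro rfl; simp at hμ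
  have hten : ∀ (n : ℕ) (c : ℂ), Tendsto (fun x : ℝ => Complex.exp (-(μ * x)) * ((x:ℂ) ^ n * c)) atTop (𝓝 0) := by
    intro n c
    rw [tendsto_zero_iff_norm_tendsto_zero]
    have h1 := (isLittleO_pow_exp_pos_mul_atTop n hμ).tendsto_div_nhds_zero
    have h2 : Tendsto (fun x : ℝ => ‖(x ^ n / Real.exp (μ.re * x))‖ * ‖c‖) atTop (𝓝 0) := by
      simpa using (h1.norm).mul_const ‖c‖
    refine h2.congr fun x => ?_
    simp only [norm_mul, Complex.norm_exp, norm_div, norm_pow, Complex.norm_real]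
    simp [Real.exp_neg]
    field_simp
  have h := integral_Ioi_of_hasDerivAt_of_tendsto' (a := 0) (m := 0)
    (f := fun x : ℝ => -(Complex.exp (-(μ * x)) * ((x:ℂ) ^ 2 * (1 / μ)) +
       Complex.exp (-(μ * x)) * ((x:ℂ) ^ 1 * (2 / μ ^ 2)) +
       Complex.exp (-(μ * x)) * ((x:ℂ) ^ 0 * (2 / μ ^ 3))))
    (f' := fun x : ℝ => (x:ℂ) ^ 2 * Complex.exp (-(μ * x))) ?_ (int_sq_exp_aux μ hμ) ?_
  · rw [h]; simp
  · intro x _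
    have h2 : HasDerivAt (fun x : ℝ => (x : ℂ)) 1 x := Complex.ofRealCLM.hasDerivAt
    have h3 : HasDerivAt (fun x : ℝ => Complex.exp (-(μ * x))) (Complex.exp (-(μ * x)) * -(μ * 1)) x :=
      ((h2.const_mul μ).neg).cexp
    have h4 : ∀ (n : ℕ) (c : ℂ), HasDerivAt (fun x : ℝ => Complex.exp (-(μ * x)) * ((x:ℂ) ^ n * c))
      (Complex.exp (-(μ * x)) * -(μ * 1) * ((x:ℂ) ^ n * c) + Complex.exp (-(μ * x)) * ((n * (x:ℂ) ^ (n-1) * 1) * c)) x :=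
      fun n c => h3.mul ((h2.pow n).mul_const c)
    refine ((((h4 2 _).add (h4 1 _)).add (h4 0 _)).neg).congr_deriv ?_
    simp
    field_simp
    ring
  · simpa using (((hten 2 _).add (hten 1 _)).add (hten 0 _)).neg

open MeasureTheory Filter Topology in
lemma integrable_cube (a : ℝ) (ha : 1 ≤ a) :
    Integrable (fun w : ℝ => ((a:ℂ) + 2 * Real.pi * w * Complex.I) ^ (-3 : ℤ)) := by
  have hne : ∀ w : ℝ, ((a:ℂ) + 2 * Real.pi * w * Complex.I) ≠ 0 := by
    intro w h
    have := congrArg Complex.re h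
    simp at this; linarith
  refine Integrable.mono' (integrable_inv_one_add_sq) ?_ ?_
  · apply Continuous.aestronglyMeasurable
    exact Continuous.zpow₀ (by fun_prop) _ (fun w => Or.inl (hne w))
  · refine Eventually.of_forall fun w => ?_
    set z := ((a:ℂ) + 2 * Real.pi * w * Complex.I) with hz
    have h1 : 1 + w ^ 2 ≤ ‖z‖ ^ 2 := by
      rw [Complex.sq_norm, Complex.normSq_apply]
      have hr : z.re = a := by simp [hz]
      have hi : z.im = 2 * Real.pi * w := by simp [hz]
      rw [hr, hi]
      have := Real.pi_gt_three
      nlinarith [sq_nonneg w, mul_nonneg (sq_nonneg w) (by nlinarith : (0:ℝ) ≤ (2 * Real.pi)^2 - 1)]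
    have h2 : 1 ≤ ‖z‖ := by nlinarith [sq_nonneg w, norm_nonneg z]
    have h3 : ‖z‖ ^ 2 ≤ ‖z‖ ^ 3 := pow_le_pow_right₀ h2 (by norm_num)
    rw [norm_zpow, zpow_neg]
    refine inv_anti₀ (by positivity) ?_
    exact_mod_cast h1.trans h3

open MeasureTheory Filter Topology FourierTransform in
lemma inv_lap (a : ℝ) (ha : 1 ≤ a) :
    ∫ w : ℝ, Complex.exp (2 * Real.pi * w * Complex.I) * (2 * ((a:ℂ) + 2 * Real.pi * w * Complex.I) ^ (-3 : ℤ))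
      = Complex.exp (-a) := by
  set f : ℝ → ℂ := (Set.Ioi (0:ℝ)).indicator (fun x => (x:ℂ) ^ 2 * Complex.exp (-(a * x))) with hf
  have hfi : Integrable f := by
    rw [hf, integrable_indicator_iff measurableSet_Ioi]
    exact int_sq_exp_aux a (by simp; linarith)
  have hF : 𝓕 f = fun w : ℝ => 2 * ((a:ℂ) + 2 * Real.pi * w * Complex.I) ^ (-3 : ℤ) := by
    funext w
    rw [Real.fourier_real_eq_integral_exp_smul]
    have e1 : ∀ v : ℝ, Complex.exp (↑(-2 * Real.pi * v * w) * Complex.I) • f v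
        = (Set.Ioi (0:ℝ)).indicator (fun x : ℝ => (x:ℂ) ^ 2 * Complex.exp (-(((a:ℂ) + 2 * Real.pi * w * Complex.I) * x))) v := by
      intro v
      rw [hf]
      by_cases hv : v ∈ Set.Ioi (0:ℝ)
      · rw [Set.indicator_of_mem hv, Set.indicator_of_mem hv, smul_eq_mul, mul_left_comm, ← Complex.exp_add]
        congr 2; push_cast; ring
      · rw [Set.indicator_of_notMem hv, Set.indicator_of_notMem hv, smul_zero]
    simp_rw [e1]
    rw [integral_indicator measurableSet_Ioi, int_sq_exp _ (by simp; linarith), div_eq_mul_inv, zpow_neg]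
    norm_cast
  have hc : ContinuousAt f 1 := by
    have : f =ᶠ[𝓝 1] (fun x : ℝ => (x:ℂ) ^ 2 * Complex.exp (-(a * x))) := by
      filter_upwards [Ioi_mem_nhds (show (0:ℝ) < 1 by norm_num)] with x hx
      rw [hf, Set.indicator_of_mem hx]
    rw [continuousAt_congr this]
    fun_prop
  have h := hfi.fourierInv_fourier_eq (by rw [hF]; exact (integrable_cube a ha).const_mul 2) hc
  rw [hF, Real.fourierInv_eq'] at h
  have hf1 : f 1 = Complex.exp (-a) := by
    rw [hf, Set.indicator_of_mem (by simp)]; simp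
  rw [← hf1, ← h]
  congr 1; funext w
  rw [smul_eq_mul]
  congr 2
  simp
section Analytic2
variable {ι : Type*} [Fintype ι] {B : Type*} [NormedRing B] [NormedAlgebra ℂ B]

/-- The constant in the analyticity estimate. -/
def c1 (N : ℕ) (β : ℝ) : ℝ :=
  Real.exp 1 * (2 * ((1 + (c0 N β)⁻¹) * ((c0 N β)⁻¹) ^ 2)) * Real.pi

lemma c0_pos (N : ℕ) (β : ℝ) (hβ : 0 < β) : 0 < c0 N β := by
  unfold c0; positivity

lemma c1_pos (N : ℕ) (β : ℝ) (hβ : 0 < β) : 0 < c1 N β := by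
  have := c0_pos N β hβ
  have := Real.pi_pos
  unfold c1; positivity

lemma res_bound (op : (ι → ℂ) →ₐ[ℂ] B) (κ : ι → ℝ) (hκ : ∀ i, 0 ≤ κ i)
    (hT : ∀ t : ℝ, 0 ≤ t → ‖semi op κ t‖ ≤ 1)
    (N : ℕ) (β : ℝ) (hβ : 0 < β) (hN : ∀ t : ℝ, 0 ≤ t → ‖(1 - semi op κ t) ^ N‖ ≤ 2 ^ N - β)
    (l : ℂ) (hl : 0 < l.re) :
    ‖op (fun i => κ i * (κ i + l) ^ (-3 : ℤ))‖
      ≤ (1 + (c0 N β)⁻¹) * ((c0 N β)⁻¹) ^ 2 * (‖l‖ ^ 2)⁻¹ := by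
  have hc := c0_pos N β hβ
  have h1 : ‖(1:B)‖ ≤ 1 := by
    have := hT 0 le_rfl; simpa [semi_zero] using this
  have hl0 : l ≠ 0 := by rintro rfl; simp at hl
  have hln : 0 < ‖l‖ := norm_pos_iff.2 hl0
  have hne : ∀ i, (κ i + l : ℂ) ≠ 0 := by
    intro i h
    have := congrArg Complex.re h
    simp at this; linarith [hκ i]
  set R := op (fun i => (κ i + l : ℂ)⁻¹) with hR
  have hDR : op (fun i => l + κ i) * R = 1 := by
    rw [hR, ← map_mul, ← map_one op]; congr 1; funext i
    simp only [Pi.mul_apply, Pi.one_apply]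
    rw [add_comm l]; exact mul_inv_cancel₀ (hne i)
  have hRn : ‖l‖ * ‖R‖ ≤ (c0 N β)⁻¹ := by
    have := semi_resolvent op κ hT N β hβ hN l hl R
    rw [hDR] at this
    rw [← one_div, le_div_iff₀ hc]; linarith
  have hRn' : ‖R‖ ≤ (c0 N β)⁻¹ * ‖l‖⁻¹ := by
    rw [← div_eq_mul_inv, le_div_iff₀ hln]; linarith
  have hD : ‖op (fun i => κ i * (κ i + l : ℂ)⁻¹)‖ ≤ 1 + (c0 N β)⁻¹ := by
    have : (fun i => κ i * (κ i + l : ℂ)⁻¹ : ι → ℂ) = 1 - l • (fun i => (κ i + l : ℂ)⁻¹) := by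
      funext i
      have := hne i
      simp; field_simp; ring
    rw [this, map_sub, map_smul, map_one]
    refine (norm_sub_le _ _).trans ?_
    rw [norm_smul]
    exact add_le_add h1 hRn
  have hsplit : (fun i => κ i * (κ i + l) ^ (-3 : ℤ) : ι → ℂ)
      = (fun i => κ i * (κ i + l : ℂ)⁻¹) * ((fun i => (κ i + l : ℂ)⁻¹) * (fun i => (κ i + l : ℂ)⁻¹)) := by
    funext i
    have := hne i
    simp only [Pi.mul_apply]
    rw [zpow_neg]
    field_simp
  rw [hsplit, map_mul, map_mul]
  calc _ ≤ ‖op (fun i => κ i * (κ i + l : ℂ)⁻¹)‖ * (‖R‖ * ‖R‖) :=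
        (norm_mul_le _ _).trans (by gcongr; exact norm_mul_le _ _)
    _ ≤ (1 + (c0 N β)⁻¹) * (((c0 N β)⁻¹ * ‖l‖⁻¹) * ((c0 N β)⁻¹ * ‖l‖⁻¹)) := by gcongr
    _ = _ := by rw [inv_pow]; ring

open MeasureTheory Filter in
lemma semi_deriv_bound [CompleteSpace B] (op : (ι → ℂ) →ₐ[ℂ] B) (κ : ι → ℝ) (hκ : ∀ i, 0 ≤ κ i)
    (hT : ∀ t : ℝ, 0 ≤ t → ‖semi op κ t‖ ≤ 1)
    (N : ℕ) (β : ℝ) (hβ : 0 < β) (hN : ∀ t : ℝ, 0 ≤ t → ‖(1 - semi op κ t) ^ N‖ ≤ 2 ^ N - β) :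
    ‖op (fun i => κ i * Complex.exp (-(κ i)))‖ ≤ c1 N β := by
  have hc := c0_pos N β hβ
  let L : (ι → ℂ) →L[ℂ] B := LinearMap.toContinuousLinearMap op.toLinearMap
  have hL : ∀ m, L m = op m := fun m => rfl
  set K := (1 + (c0 N β)⁻¹) * ((c0 N β)⁻¹) ^ 2 with hK
  set φ : ℝ → ι → ℂ := fun w i => Complex.exp 1 * κ i * (Complex.exp (2 * Real.pi * w * Complex.I) *
    (2 * (((1 + κ i : ℝ):ℂ) + 2 * Real.pi * w * Complex.I) ^ (-3 : ℤ))) with hφ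
  have hIntegr : ∀ i, Integrable (fun w => φ w i) := by
    intro i
    apply Integrable.const_mul
    refine Integrable.bdd_mul (c := 1) ((integrable_cube _ (by linarith [hκ i])).const_mul 2) (by fun_prop) ?_
    refine Eventually.of_forall fun w => ?_
    rw [show (2 * Real.pi * w * Complex.I : ℂ) = ((2 * Real.pi * w : ℝ) : ℂ) * Complex.I by push_cast; ring,
      Complex.norm_exp_ofReal_mul_I]
  have hIntegr' : Integrable φ := Integrable.of_eval hIntegr
  have hval : ∫ w, φ w = fun i => κ i * Complex.exp (-(κ i)) := by
    funext i
    rw [eval_integral hIntegr]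
    simp only [hφ]
    rw [integral_const_mul, inv_lap _ (by linarith [hκ i]), mul_right_comm, ← Complex.exp_add]
    push_cast
    ring_nf
  rw [← hval, ← hL, ← L.integral_comp_comm hIntegr']
  have hb : ∀ w : ℝ, ‖L (φ w)‖ ≤ Real.exp 1 * (2 * K) * (1 + w ^ 2)⁻¹ := by
    intro w
    set l : ℂ := 1 + 2 * Real.pi * w * Complex.I with hl
    have e1 : φ w = (Complex.exp l * 2) • (fun i => κ i * (κ i + l) ^ (-3 : ℤ) : ι → ℂ) := by
      funext i
      simp only [hφ, hl, Pi.smul_apply, smul_eq_mul, Complex.exp_add]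
      rw [show (((1 + κ i : ℝ):ℂ) + 2 * Real.pi * w * Complex.I) = (κ i + (1 + 2 * Real.pi * w * Complex.I)) by push_cast; ring]
      ring
    have hre : l.re = 1 := by simp [hl]
    have him : l.im = 2 * Real.pi * w := by simp [hl]
    have h1 : 1 + w ^ 2 ≤ ‖l‖ ^ 2 := by
      rw [Complex.sq_norm, Complex.normSq_apply, hre, him]
      have := Real.pi_gt_three
      nlinarith [sq_nonneg w, mul_nonneg (sq_nonneg w) (by nlinarith : (0:ℝ) ≤ (2 * Real.pi)^2 - 1)]
    rw [e1, hL, map_smul, norm_smul, norm_mul, Complex.norm_exp, hre]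
    have h2 := res_bound op κ hκ hT N β hβ hN l (by rw [hre]; norm_num)
    calc _ ≤ Real.exp 1 * ‖(2:ℂ)‖ * (K * (‖l‖ ^ 2)⁻¹) := by gcongr
      _ ≤ Real.exp 1 * ‖(2:ℂ)‖ * (K * (1 + w ^ 2)⁻¹) := by gcongr
      _ = _ := by simp; ring
  refine (norm_integral_le_of_norm_le (integrable_inv_one_add_sq.const_mul _) (Eventually.of_forall hb)).trans ?_
  rw [integral_const_mul, integral_univ_inv_one_add_sq]
  unfold c1
  exact le_rfl

lemma semi_deriv_bound' [CompleteSpace B] (op : (ι → ℂ) →ₐ[ℂ] B) (κ : ι → ℝ) (hκ : ∀ i, 0 ≤ κ i)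
    (hT : ∀ t : ℝ, 0 ≤ t → ‖semi op κ t‖ ≤ 1)
    (N : ℕ) (β : ℝ) (hβ : 0 < β) (hN : ∀ t : ℝ, 0 ≤ t → ‖(1 - semi op κ t) ^ N‖ ≤ 2 ^ N - β)
    (t : ℝ) (ht : 0 < t) :
    ‖op (fun i => κ i * Complex.exp (-(t * κ i)))‖ ≤ c1 N β / t := by
  have h := semi_deriv_bound op (fun i => t * κ i) (fun i => mul_nonneg ht.le (hκ i))
    (fun s hs => by rw [semi_scale, ← Complex.ofReal_mul]; exact hT _ (by positivity)) N β hβ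
    (fun s hs => by rw [semi_scale, ← Complex.ofReal_mul]; exact hN _ (by positivity))
  have e1 : (fun i => ((t * κ i : ℝ) : ℂ) * Complex.exp (-((t * κ i : ℝ) : ℂ)) : ι → ℂ)
      = (t:ℂ) • (fun i => κ i * Complex.exp (-(t * κ i))) := by
    funext i; simp; ring
  rw [e1, map_smul, norm_smul, Complex.norm_real, Real.norm_of_nonneg ht.le] at h
  rw [le_div_iff₀ ht]; linarith

/-- The sector opening. -/
def δ0 (N : ℕ) (β : ℝ) : ℝ := (2 * Real.exp 1 * (c1 N β + 1))⁻¹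

lemma δ0_pos (N : ℕ) (β : ℝ) (hβ : 0 < β) : 0 < δ0 N β := by
  have := c1_pos N β hβ
  unfold δ0; positivity

lemma δ0_le (N : ℕ) (β : ℝ) (hβ : 0 < β) : δ0 N β ≤ 1 := by
  have := c1_pos N β hβ
  have := Real.add_one_le_exp 1
  unfold δ0
  apply inv_le_one_of_one_le₀
  nlinarith

lemma semi_sector [CompleteSpace B] (op : (ι → ℂ) →ₐ[ℂ] B) (κ : ι → ℝ) (hκ : ∀ i, 0 ≤ κ i)
    (hT : ∀ t : ℝ, 0 ≤ t → ‖semi op κ t‖ ≤ 1)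
    (N : ℕ) (β : ℝ) (hβ : 0 < β) (hN : ∀ t : ℝ, 0 ≤ t → ‖(1 - semi op κ t) ^ N‖ ≤ 2 ^ N - β)
    (z : ℂ) (hz : z ∈ Sect (δ0 N β)) : ‖semi op κ z‖ ≤ 2 := by
  obtain ⟨t, ht, hzt⟩ := hz
  have hc1 := c1_pos N β hβ
  have hδ := δ0_pos N β hβ
  rcases ht.eq_or_lt with rfl | ht
  · simp at hzt
    rw [hzt]
    have := hT 0 le_rfl
    simp at this
    linarith
  set h : ℂ := z - t with hh
  have hsum : HasSum (fun k : ℕ => (fun i => (-h) ^ k / k.factorial * (κ i ^ k * Complex.exp (-(t * κ i))) : ι → ℂ))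
      (fun i => Complex.exp (-(z * κ i))) := by
    rw [Pi.hasSum]
    intro i
    have h1 := (NormedSpace.expSeries_div_hasSum_exp (-(h * κ i))).mul_right (Complex.exp (-(t * κ i)))
    rw [← Complex.exp_eq_exp_ℂ, ← Complex.exp_add] at h1
    have e0 : (fun k : ℕ => (-h) ^ k / k.factorial * (κ i ^ k * Complex.exp (-(t * κ i))))
        = fun k : ℕ => (-(h * κ i)) ^ k / k.factorial * Complex.exp (-(t * κ i)) := by
      funext k
      rw [← neg_mul h, mul_pow]; ring
    have e0' : Complex.exp (-(z * κ i)) = Complex.exp (-(h * κ i) + -(t * κ i)) := by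
      rw [hh]; ring_nf
    show HasSum (fun k : ℕ => (-h) ^ k / k.factorial * (κ i ^ k * Complex.exp (-(t * κ i)))) (Complex.exp (-(z * κ i)))
    rw [e0, e0']; exact h1
  have hsum2 := hsum.map op (op_continuous op)
  have hg : HasSum (fun k : ℕ => ((1:ℝ)/2) ^ k) 2 := hasSum_geometric_two
  unfold semi
  rw [← hsum2.tsum_eq]
  refine tsum_of_norm_bounded hg fun k => ?_
  have e1 : (fun i => (-h) ^ k / k.factorial * (κ i ^ k * Complex.exp (-(t * κ i))) : ι → ℂ)
      = ((-h) ^ k / k.factorial) • (fun i => (κ i ^ k * Complex.exp (-(t * κ i))) : ι → ℂ) := by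
    funext i; simp
  simp only [Function.comp]
  rw [e1, map_smul, norm_smul]
  rcases Nat.eq_zero_or_pos k with rfl | hk
  · have := hT t ht.le
    simpa [semi] using this
  have hk' : (0:ℝ) < k := by exact_mod_cast hk
  have e2 : (fun i => (κ i ^ k * Complex.exp (-(t * κ i))) : ι → ℂ)
      = (fun i => κ i * Complex.exp (-((t / k : ℝ) * κ i))) ^ k := by
    funext i
    simp only [Pi.pow_apply, mul_pow]
    rw [← Complex.exp_nat_mul]
    congr 2
    have : (k:ℂ) ≠ 0 := by exact_mod_cast hk.ne'
    push_cast; field_simp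
  have h3 : ‖op (fun i => (κ i ^ k * Complex.exp (-(t * κ i))) : ι → ℂ)‖ ≤ (c1 N β / (t / k)) ^ k := by
    rw [e2, map_pow]
    refine (norm_pow_le' _ hk).trans ?_
    gcongr
    exact semi_deriv_bound' op κ hκ hT N β hβ hN _ (by positivity)
  have h4 : (k:ℝ) ^ k / k.factorial ≤ Real.exp 1 ^ k := by
    rw [← Real.exp_nat_mul, mul_one]
    exact Real.pow_div_factorial_le_exp k hk'.le k
  calc _ ≤ ((δ0 N β * t) ^ k / k.factorial) * (c1 N β / (t / k)) ^ k := by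
        gcongr
        rw [norm_div, norm_pow, norm_neg]
        simp only [RCLike.norm_natCast]
        gcongr
    _ = (δ0 N β * c1 N β) ^ k * ((k:ℝ) ^ k / k.factorial) := by
        rw [div_pow, div_pow, mul_pow, mul_pow]; field_simp
    _ ≤ (δ0 N β * c1 N β) ^ k * Real.exp 1 ^ k := by gcongr
    _ = (δ0 N β * c1 N β * Real.exp 1) ^ k := by rw [mul_pow (δ0 N β * c1 N β)]
    _ ≤ (1 / 2) ^ k := by
        gcongr
        unfold δ0
        rw [inv_mul_eq_div, div_mul_eq_mul_div, div_le_div_iff₀ (by positivity) (by norm_num)]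
        nlinarith [Real.exp_pos 1]

end Analytic2
section Geometry
set_option linter.unusedSectionVars false

lemma sgn_sq (b : Bool) : sgn b ^ 2 = 1 := by cases b <;> simp [sgn]

lemma abs_sgn (b : Bool) : |sgn b| = 1 := by cases b <;> simp [sgn]

lemma sum_cube_succ {G : Type*} [AddCommMonoid G] (m : ℕ) (F : (Fin (m+1) → Bool) → G) :
    ∑ ε, F ε = ∑ ε : Fin m → Bool, (F (Fin.cons true ε) + F (Fin.cons false ε)) := by
  rw [← (Fin.consEquiv (fun _ : Fin (m+1) => Bool)).sum_comp, Fintype.sum_prod_type]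
  simp [Fin.consEquiv, Finset.sum_add_distrib]

lemma moments (m : ℕ) (a : Fin m → ℝ) (ha : ∀ i, a i ^ 2 = 1) :
    ∑ ε : Fin m → Bool, (∑ i, sgn (ε i) * a i) ^ 2 = m * 2 ^ m ∧
    ∑ ε : Fin m → Bool, (∑ i, sgn (ε i) * a i) ^ 4 = (3 * m ^ 2 - 2 * m) * 2 ^ m := by
  induction m with
  | zero => simp
  | succ m ih =>
    obtain ⟨h2, h4⟩ := ih (fun i => a i.succ) (fun i => ha _)
    have h0 := ha 0
    have h04 : a 0 ^ 4 = 1 := by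
      rw [show a 0 ^ 4 = (a 0 ^ 2) ^ 2 by ring, h0, one_pow]
    constructor
    · rw [sum_cube_succ]
      have : ∀ ε : Fin m → Bool, (∑ i, sgn ((Fin.cons true ε : Fin (m+1) → Bool) i) * a i) ^ 2
          + (∑ i, sgn ((Fin.cons false ε : Fin (m+1) → Bool) i) * a i) ^ 2
          = 2 * (∑ i, sgn (ε i) * a i.succ) ^ 2 + 2 := by
        intro ε
        simp only [Fin.sum_univ_succ, Fin.cons_zero, Fin.cons_succ, sgn]
        simp
        linear_combination 2 * h0
      rw [Finset.sum_congr rfl (fun ε _ => this ε), Finset.sum_add_distrib, ← Finset.mul_sum, h2]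
      simp
      ring
    · rw [sum_cube_succ]
      have : ∀ ε : Fin m → Bool, (∑ i, sgn ((Fin.cons true ε : Fin (m+1) → Bool) i) * a i) ^ 4
          + (∑ i, sgn ((Fin.cons false ε : Fin (m+1) → Bool) i) * a i) ^ 4
          = 2 * (∑ i, sgn (ε i) * a i.succ) ^ 4 + 12 * (∑ i, sgn (ε i) * a i.succ) ^ 2 + 2 := by
        intro ε
        simp only [Fin.sum_univ_succ, Fin.cons_zero, Fin.cons_succ, sgn]
        simp
        set S := (∑ x : Fin m, (if ε x = true then a x.succ else -a x.succ))
        linear_combination 12 * S ^ 2 * h0 + 2 * h04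
      rw [Finset.sum_congr rfl (fun ε _ => this ε), Finset.sum_add_distrib,
        Finset.sum_add_distrib, ← Finset.mul_sum, ← Finset.mul_sum, h2, h4]
      simp
      ring

lemma abs_moment (k : ℕ) (hk : 1 ≤ k) (a : Fin (k^2) → ℝ) (ha : ∀ i, a i ^ 2 = 1) :
    2 ^ (k^2) * (k / 4 : ℝ) ≤ ∑ ε : Fin (k^2) → Bool, |∑ i, sgn (ε i) * a i| := by
  obtain ⟨h2, h4⟩ := moments (k^2) a ha
  have hk' : (1:ℝ) ≤ k := by exact_mod_cast hk
  have hpt : ∀ s : ℝ, 4 * (k:ℝ)^2 * s ^ 2 - s ^ 4 ≤ 4 * (k:ℝ)^3 * |s| := by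
    intro s
    have e2 : s ^ 2 = |s| ^ 2 := (sq_abs s).symm
    have e4 : s ^ 4 = |s| ^ 4 := by rw [show s ^ 4 = (s^2)^2 by ring, e2]; ring
    rw [e2, e4]
    have hs := abs_nonneg s
    set u := |s|
    have h3 : 0 ≤ u^3 - 4 * k^2 * u + 4 * (k:ℝ)^3 := by
      have h5 : 0 ≤ (u - 6/5 * k)^2 * (u + 12/5 * k) := by positivity
      have h6 : 0 ≤ (k:ℝ)^2 * u := by positivity
      have h7 : 0 ≤ (k:ℝ)^3 := by positivity
      nlinarith
    nlinarith [mul_nonneg hs h3]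
  have h := Finset.sum_le_sum (fun (ε : Fin (k^2) → Bool) (_ : ε ∈ Finset.univ) => hpt (∑ i, sgn (ε i) * a i))
  rw [Finset.sum_sub_distrib, ← Finset.mul_sum, ← Finset.mul_sum, h2, h4] at h
  push_cast at h
  set P : ℝ := 2 ^ (k^2)
  have hP : 0 < P := by positivity
  set T := ∑ ε : Fin (k^2) → Bool, |∑ i, sgn (ε i) * a i|
  have : 4 * (k:ℝ)^3 * (P * (k/4)) ≤ 4 * (k:ℝ)^3 * T := by
    refine le_trans ?_ h
    have : 0 ≤ P * (k:ℝ)^2 := by positivity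
    nlinarith
  exact le_of_mul_le_mul_left this (by positivity)

lemma lpNorm_le_one {n : ℕ} {q : ℝ} (hq : 1 < q) (f : (Fin n → Bool) → X) (hf : ∀ ε, ‖f ε‖ ≤ 1) :
    lpNorm q f ≤ 1 := by
  unfold lpNorm
  apply Real.rpow_le_one (by positivity) _ (by positivity)
  have : ∑ ε : Fin n → Bool, ‖f ε‖ ^ q ≤ ∑ ε : Fin n → Bool, (1:ℝ) :=
    Finset.sum_le_sum fun ε _ => Real.rpow_le_one (norm_nonneg _) (hf ε) (by linarith)
  simp at this
  rw [inv_mul_le_iff₀ (by positivity)]; simpa using this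

lemma le_lpNorm {n : ℕ} {q : ℝ} (hq : 1 < q) (f : (Fin n → Bool) → X) (b : ℝ) (hb : 0 ≤ b)
    (hf : ∀ ε, b ≤ ‖f ε‖) : b ≤ lpNorm q f := by
  unfold lpNorm
  have h0 : b = (b ^ q) ^ (1/q) := by
    rw [← Real.rpow_mul hb, mul_one_div_cancel (by linarith), Real.rpow_one]
  rw [h0]
  apply Real.rpow_le_rpow (by positivity) _ (by positivity)
  have : ∑ ε : Fin n → Bool, b ^ q ≤ ∑ ε : Fin n → Bool, ‖f ε‖ ^ q :=
    Finset.sum_le_sum fun ε _ => Real.rpow_le_rpow hb (hf ε) (by linarith)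
  simp at this
  rw [le_inv_mul_iff₀ (by positivity)]; simpa using this

/-- Quantitative failure of containing `ℓ₁^N` isometrically. -/
def Flat (X : Type*) [NormedAddCommGroup X] [NormedSpace ℝ X] (ι : Type*) [Fintype ι] (δ : ℝ) : Prop :=
  ∀ x : ι → X, (∀ i, ‖x i‖ ≤ 1) → ∃ s : ι → Bool,
    ‖∑ i, sgn (s i) • x i‖ ≤ Fintype.card ι * (1 - δ)

lemma flat_of_kconvex (hX : KConvex X) : ∃ m : ℕ, ∃ δ : ℝ, 0 < δ ∧ δ < 1 ∧ Flat X (Fin m → Bool) δ := by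
  obtain ⟨q, hq, M, hM⟩ := hX
  obtain ⟨k0, hk0⟩ := exists_nat_gt (8 * max M 0)
  set k := k0 + 1 with hkdef
  have hk : 1 ≤ k := by omega
  have hk1 : (1:ℝ) ≤ k := by exact_mod_cast hk
  have hkM : 8 * max M 0 < k := by rw [hkdef]; push_cast; linarith
  refine ⟨k^2, 1 / (8 * k), by positivity, ?_, ?_⟩
  · rw [div_lt_one (by positivity)]; linarith
  by_contra hcon
  unfold Flat at hcon
  push Not at hcon
  obtain ⟨f, hf, hs⟩ := hcon
  have key : ∀ a : (Fin (k^2) → Bool) → ℝ, (∀ ε, |a ε| ≤ 1) →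
      ∑ ε, |a ε| - 2 ^ (k^2) * (1 / (8 * k)) ≤ ‖∑ ε, a ε • f ε‖ := by
    intro a ha
    have h1 := hs (fun ε => decide (0 ≤ a ε))
    have h2 : ∑ ε, sgn (decide (0 ≤ a ε)) • f ε
        = ∑ ε, a ε • f ε + ∑ ε, (sgn (decide (0 ≤ a ε)) - a ε) • f ε := by
      rw [← Finset.sum_add_distrib]
      refine Finset.sum_congr rfl fun ε _ => ?_
      rw [← add_smul]; congr 1; ring
    have h3 : ‖∑ ε, (sgn (decide (0 ≤ a ε)) - a ε) • f ε‖ ≤ ∑ ε, (1 - |a ε|) := by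
      refine norm_sum_le_of_le _ fun ε _ => ?_
      rw [norm_smul]
      have : ‖sgn (decide (0 ≤ a ε)) - a ε‖ ≤ 1 - |a ε| := by
        have := ha ε
        rw [abs_le] at this
        by_cases h : 0 ≤ a ε
        · simp only [h, sgn, decide_true, if_true]
          rw [abs_of_nonneg h, Real.norm_of_nonneg (by linarith)]
        · have h' : a ε < 0 := not_le.1 h
          simp only [h, sgn, decide_false]
          rw [abs_of_neg h', Real.norm_eq_abs, abs_le]
          simp
          constructor <;> linarith
      calc _ ≤ (1 - |a ε|) * 1 := mul_le_mul this (hf ε) (norm_nonneg _) (by linarith [ha ε])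
        _ = _ := mul_one _
    have h4 := norm_add_le (∑ ε, a ε • f ε) (∑ ε, (sgn (decide (0 ≤ a ε)) - a ε) • f ε)
    rw [← h2] at h4
    simp only [Finset.sum_sub_distrib] at h3
    simp at h1 h3
    rw [mul_sub] at h1
    simp only [one_div, mul_inv] at h1 ⊢
    linarith
  have hRad : ∀ ε', (k / 8 : ℝ) ≤ ‖Rad f ε'‖ := by
    intro ε'
    set S : (Fin (k^2) → Bool) → ℝ := fun ε => ∑ i, sgn (ε i) * sgn (ε' i) with hS
    have hmom := abs_moment k hk (fun i => sgn (ε' i)) (fun i => sgn_sq _)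
    have hSle : ∀ ε, |S ε| ≤ k^2 := by
      intro ε
      refine (Finset.abs_sum_le_sum_abs _ _).trans ?_
      simp [abs_mul, abs_sgn]
    have hR : Rad f ε' = ((k:ℝ)^2 * (2 ^ (k^2) : ℝ)⁻¹) • ∑ ε, (S ε / k^2) • f ε := by
      unfold Rad coeff
      simp only [walsh, Finset.prod_singleton, Finset.smul_sum, smul_smul]
      rw [Finset.sum_comm]
      refine Finset.sum_congr rfl fun ε _ => ?_
      rw [← Finset.sum_smul]
      congr 1
      rw [hS]
      simp only
      rw [Finset.sum_div, Finset.mul_sum]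
      refine Finset.sum_congr rfl fun i _ => ?_
      field_simp
    have h5 := key (fun ε => S ε / k^2) (fun ε => by
      rw [abs_div, abs_of_nonneg (by positivity : (0:ℝ) ≤ (k:ℝ)^2), div_le_one (by positivity)]; exact hSle ε)
    rw [hR, norm_smul, Real.norm_of_nonneg (by positivity)]
    have h6 : ∑ ε, |S ε / k^2| = (∑ ε, |S ε|) / k^2 := by
      rw [Finset.sum_div]
      refine Finset.sum_congr rfl fun ε _ => ?_
      rw [abs_div, abs_of_nonneg (by positivity : (0:ℝ) ≤ (k:ℝ)^2)]
    simp only [h6] at h5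
    have hP : (0:ℝ) < 2 ^ (k^2) := by positivity
    calc (k / 8 : ℝ) = ((k:ℝ)^2 * (2 ^ (k^2) : ℝ)⁻¹) * ((2 ^ (k^2) * (k / 4 : ℝ)) / k^2 - 2 ^ (k^2) * (1 / (8 * k))) := by
          field_simp; ring
      _ ≤ ((k:ℝ)^2 * (2 ^ (k^2) : ℝ)⁻¹) * ((∑ ε, |S ε|) / k^2 - 2 ^ (k^2) * (1 / (8 * k))) := by gcongr
      _ ≤ _ := by gcongr
  have h7 := le_lpNorm hq _ _ (by positivity) hRad
  have h8 := hM _ f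
  have h9 := lpNorm_le_one hq f hf
  have h10 : 0 ≤ lpNorm q f := le_lpNorm hq _ _ le_rfl (fun _ => norm_nonneg _)
  have h11 : M * lpNorm q f ≤ max M 0 * 1 :=
    mul_le_mul (le_max_left _ _) h9 h10 (le_max_right _ _)
  linarith

lemma tangent_lt {p a A : ℝ} (hp : 1 < p) (ha : 0 ≤ a) (hA : 0 < A) (hne : a ≠ A) :
    A ^ p + p * A ^ (p - 1) * (a - A) < a ^ p := by
  have h := one_add_mul_self_lt_rpow_one_add (s := a / A - 1) (p := p)
    (by have : 0 ≤ a / A := by positivity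
        linarith) (by
        intro h; apply hne; have : a / A = 1 := by linarith
        rwa [div_eq_one_iff_eq hA.ne'] at this) hp
  have h2 : (1 + (a / A - 1)) ^ p = a ^ p / A ^ p := by
    rw [show 1 + (a / A - 1) = a / A by ring, Real.div_rpow ha hA.le]
  have hAp : 0 < A ^ p := by positivity
  rw [h2, lt_div_iff₀ hAp] at h
  refine lt_of_eq_of_lt ?_ h
  rw [Real.rpow_sub_one hA.ne']
  field_simp

lemma tangent_le {p a A : ℝ} (hp : 1 < p) (ha : 0 ≤ a) (hA : 0 < A) :
    A ^ p + p * A ^ (p - 1) * (a - A) ≤ a ^ p := by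
  by_cases h : a = A
  · subst h; simp
  · exact (tangent_lt hp ha hA h).le

lemma gap_exists {p δ : ℝ} (hp : 1 < p) (hδ : 0 < δ) (hδ1 : δ < 1) :
    ∃ γ : ℝ, 0 < γ ∧ γ ≤ 1 ∧ ∀ A ∈ Set.Icc 0 (1 - δ), A ^ p + p * A ^ (p - 1) * (1 - A) + γ ≤ 1 := by
  have hc : ContinuousOn (fun A : ℝ => 1 - (A ^ p + p * A ^ (p - 1) * (1 - A))) (Set.Icc 0 (1 - δ)) := by
    apply Continuous.continuousOn
    have h1 : Continuous fun A : ℝ => A ^ p := Real.continuous_rpow_const (by linarith)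
    have h2 : Continuous fun A : ℝ => A ^ (p - 1) := Real.continuous_rpow_const (by linarith)
    fun_prop
  obtain ⟨A0, hA0, hmin⟩ := isCompact_Icc.exists_isMinOn (Set.nonempty_Icc.2 (by linarith)) hc
  have hval : ∀ A ∈ Set.Icc 0 (1 - δ), 0 < 1 - (A ^ p + p * A ^ (p - 1) * (1 - A)) := by
    intro A hA
    rcases hA.1.eq_or_lt with h | h
    · rw [← h, Real.zero_rpow (by linarith), Real.zero_rpow (by linarith)]; simp
    · have := tangent_lt hp zero_le_one h (by have := hA.2; intro h'; linarith)
      rw [Real.one_rpow] at this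
      linarith
  refine ⟨1 - (A0 ^ p + p * A0 ^ (p - 1) * (1 - A0)), hval _ hA0, ?_, ?_⟩
  · have h1 : 0 ≤ A0 := hA0.1
    have h2 : 0 ≤ 1 - A0 := by linarith [hA0.2]
    have : 0 ≤ A0 ^ p + p * A0 ^ (p - 1) * (1 - A0) := by positivity
    linarith
  · intro A hA
    have := hmin hA
    simp only [Set.mem_ofPred_eq] at this
    linarith

lemma flat_lp_unit {ι : Type*} [Fintype ι] [DecidableEq ι] {p δ : ℝ} (hp : 1 < p)
    (hδ : 0 < δ) (hδ1 : δ < 1) : ∃ κ : ℝ, 0 ≤ κ ∧ κ < 1 ∧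
      ∀ (hX : Flat X ι δ) (x : ι → X), (∀ i, ‖x i‖ ≤ 1) → (∃ i, ‖x i‖ = 1) →
      ∑ s : ι → Bool, ‖∑ i, sgn (s i) • x i‖ ^ p ≤
        κ * 2 ^ (Fintype.card ι) * (Fintype.card ι : ℝ) ^ (p - 1) * ∑ i, ‖x i‖ ^ p := by
  obtain ⟨γ, hγ, hγ1, hgap⟩ := gap_exists (p := p) (δ := δ / 2) hp (by linarith) (by linarith)
  set N : ℝ := (Fintype.card ι : ℝ) with hNdef
  set ρ : ℝ := (1 - δ) / (1 - δ / 2) with hρ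
  have hρ0 : 0 ≤ ρ := div_nonneg (by linarith) (by linarith)
  have hρ1 : ρ < 1 := by rw [hρ, div_lt_one (by linarith)]; linarith
  have hρp : ρ ^ p < 1 := Real.rpow_lt_one hρ0 hρ1 (by linarith)
  have hρp0 : 0 ≤ ρ ^ p := by positivity
  have hP : (1:ℝ) ≤ 2 ^ (Fintype.card ι) := one_le_pow₀ (by norm_num)
  by_cases hne : Nonempty ι
  swap
  · refine ⟨0, le_rfl, zero_lt_one, fun _ x _ hex => ?_⟩
    obtain ⟨i, _⟩ := hex
    exact absurd ⟨i⟩ hne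
  have hN : 1 ≤ N := by
    rw [hNdef]; exact_mod_cast Fintype.card_pos
  refine ⟨max (1 - (1 - ρ ^ p) / 2 ^ (Fintype.card ι)) (1 - γ / N), ?_, ?_, ?_⟩
  · refine le_max_of_le_left ?_
    rw [sub_nonneg, div_le_one (by positivity)]
    linarith
  · refine max_lt ?_ ?_
    · have : 0 < (1 - ρ ^ p) / 2 ^ (Fintype.card ι) := div_pos (by linarith) (by positivity)
      linarith
    · have : 0 < γ / N := by positivity
      linarith
  have hk1 := le_max_left (1 - (1 - ρ ^ p) / 2 ^ (Fintype.card ι)) (1 - γ / N)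
  have hk2 := le_max_right (1 - (1 - ρ ^ p) / 2 ^ (Fintype.card ι)) (1 - γ / N)
  generalize max (1 - (1 - ρ ^ p) / 2 ^ (Fintype.card ι)) (1 - γ / N) = κ at hk1 hk2 ⊢
  have hk0 : 0 ≤ κ := by
    refine le_trans ?_ hk1
    rw [sub_nonneg, div_le_one (by positivity)]
    linarith
  intro hX x hx hex
  obtain ⟨i0, hi0⟩ := hex
  set A : ℝ := (∑ i, ‖x i‖) / N with hA
  have hsumA : ∑ i, ‖x i‖ = N * A := by rw [hA]; field_simp
  have hsum_pos : 1 ≤ ∑ i, ‖x i‖ := by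
    rw [← hi0]
    exact Finset.single_le_sum (fun i _ => norm_nonneg (x i)) (Finset.mem_univ i0)
  have hA0 : 0 < A := by rw [hA]; positivity
  have hbd : ∀ s : ι → Bool, ‖∑ i, sgn (s i) • x i‖ ≤ N * A := by
    intro s
    rw [← hsumA]
    refine norm_sum_le_of_le _ fun i _ => ?_
    rw [norm_smul, Real.norm_eq_abs, abs_sgn, one_mul]
  have hbdp : ∀ s : ι → Bool, ‖∑ i, sgn (s i) • x i‖ ^ p ≤ (N * A) ^ p := fun s =>
    Real.rpow_le_rpow (norm_nonneg _) (hbd s) (by linarith)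
  set Q := ∑ i, ‖x i‖ ^ p with hQ
  have hQ0 : 0 ≤ Q := Finset.sum_nonneg fun i _ => by positivity
  have hQN : Q ≤ N := by
    rw [hQ]
    calc _ ≤ ∑ i : ι, (1:ℝ) := Finset.sum_le_sum fun i _ => Real.rpow_le_one (norm_nonneg _) (hx i) (by linarith)
      _ = N := by simp [hNdef]
  have htan : ∀ i, A ^ p + p * A ^ (p - 1) * (‖x i‖ - A) ≤ ‖x i‖ ^ p := fun i =>
    tangent_le hp (norm_nonneg _) hA0
  have hlin : ∑ i, (A ^ p + p * A ^ (p - 1) * (‖x i‖ - A)) = N * A ^ p := by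
    rw [Finset.sum_add_distrib, ← Finset.mul_sum, Finset.sum_sub_distrib, hsumA]
    simp [hNdef]
  have hNAp : (N * A) ^ p = N ^ (p - 1) * (N * A ^ p) := by
    rw [Real.mul_rpow (by linarith) hA0.le, Real.rpow_sub_one (by linarith)]
    field_simp
  have hNp : 0 ≤ N ^ (p - 1) := by positivity
  have hcard : Fintype.card (ι → Bool) = 2 ^ (Fintype.card ι) := by simp
  rcases le_total (1 - δ / 2) A with hcase | hcase
  · obtain ⟨s0, hs0⟩ := hX x hx
    have h1 : ‖∑ i, sgn (s0 i) • x i‖ ^ p ≤ ρ ^ p * (N * A) ^ p := by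
      rw [← Real.mul_rpow hρ0 (by positivity)]
      refine Real.rpow_le_rpow (norm_nonneg _) (hs0.trans ?_) (by linarith)
      rw [hρ, div_mul_eq_mul_div, le_div_iff₀ (by linarith)]
      have : 0 ≤ N * (1 - δ) := mul_nonneg (by linarith) (by linarith)
      nlinarith
    have h2 : N * A ^ p ≤ Q := by
      rw [← hlin]; exact Finset.sum_le_sum fun i _ => htan i
    have h3 : ∑ s ∈ Finset.univ.erase s0, ‖∑ i, sgn (s i) • x i‖ ^ p ≤ (2 ^ (Fintype.card ι) - 1) * (N * A) ^ p := by
      refine (Finset.sum_le_sum fun s _ => hbdp s).trans ?_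
      rw [Finset.sum_const, Finset.card_erase_of_mem (Finset.mem_univ _), Finset.card_univ, hcard, nsmul_eq_mul]
      rw [Nat.cast_sub Nat.one_le_two_pow]
      simp
    rw [← Finset.add_sum_erase _ _ (Finset.mem_univ s0)]
    calc _ ≤ ρ ^ p * (N * A) ^ p + (2 ^ (Fintype.card ι) - 1) * (N * A) ^ p := add_le_add h1 h3
      _ = (1 - (1 - ρ ^ p) / 2 ^ (Fintype.card ι)) * 2 ^ (Fintype.card ι) * N ^ (p - 1) * (N * A ^ p) := by
          rw [hNAp]; field_simp; ring
      _ ≤ _ := by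
          gcongr
  · have h1 := hgap A ⟨hA0.le, hcase⟩
    have h2 : N * A ^ p + γ ≤ Q := by
      rw [← hlin, hQ, ← Finset.add_sum_erase _ _ (Finset.mem_univ i0),
        ← Finset.add_sum_erase _ (fun i => ‖x i‖ ^ p) (Finset.mem_univ i0)]
      have h3 := Finset.sum_le_sum fun i (_ : i ∈ Finset.univ.erase i0) => htan i
      rw [hi0, Real.one_rpow]
      linarith
    have h4 : N * A ^ p ≤ (1 - γ / N) * Q := by
      have : γ / N * Q ≤ γ := by
        rw [div_mul_eq_mul_div, div_le_iff₀ (by linarith)]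
        gcongr
      linarith
    have hQpos : 0 ≤ 2 ^ (Fintype.card ι) * N ^ (p - 1) * Q := by positivity
    calc _ ≤ ∑ s : ι → Bool, (N * A) ^ p := Finset.sum_le_sum fun s _ => hbdp s
      _ = 2 ^ (Fintype.card ι) * (N * A) ^ p := by
          rw [Finset.sum_const, Finset.card_univ, hcard]; simp
      _ ≤ 2 ^ (Fintype.card ι) * (N ^ (p - 1) * ((1 - γ / N) * Q)) := by rw [hNAp]; gcongr
      _ = (1 - γ / N) * (2 ^ (Fintype.card ι) * N ^ (p - 1) * Q) := by ring
      _ ≤ κ * (2 ^ (Fintype.card ι) * N ^ (p - 1) * Q) := by gcongr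
      _ = _ := by ring

lemma flat_lp {ι : Type*} [Fintype ι] [DecidableEq ι] {p δ : ℝ} (hp : 1 < p)
    (hδ : 0 < δ) (hδ1 : δ < 1) (hX : Flat X ι δ) : ∃ κ : ℝ, 0 ≤ κ ∧ κ < 1 ∧
      ∀ (x : ι → X), ∑ s : ι → Bool, ‖∑ i, sgn (s i) • x i‖ ^ p ≤
        κ * 2 ^ (Fintype.card ι) * (Fintype.card ι : ℝ) ^ (p - 1) * ∑ i, ‖x i‖ ^ p := by
  obtain ⟨κ, hκ0, hκ1, h⟩ := flat_lp_unit (X := X) (ι := ι) hp hδ hδ1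
  refine ⟨κ, hκ0, hκ1, fun x => ?_⟩
  by_cases hz : ∀ i, x i = 0
  · simp [hz, Real.zero_rpow (by linarith : p ≠ 0)]
  push Not at hz
  obtain ⟨j, hj⟩ := hz
  obtain ⟨i0, -, hi0⟩ := Finset.exists_max_image Finset.univ (fun i => ‖x i‖) ⟨j, Finset.mem_univ j⟩
  set R := ‖x i0‖ with hR
  have hRpos : 0 < R := lt_of_lt_of_le (norm_pos_iff.2 hj) (hi0 j (Finset.mem_univ j))
  have hnorm : ∀ i, ‖R⁻¹ • x i‖ = R⁻¹ * ‖x i‖ := fun i => by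
    rw [norm_smul, Real.norm_of_nonneg (by positivity)]
  have h1 := h hX (fun i => R⁻¹ • x i) (fun i => by
    rw [hnorm, inv_mul_le_iff₀ hRpos, mul_one]; exact hi0 i (Finset.mem_univ i)) ⟨i0, by
    rw [hnorm, ← hR, inv_mul_cancel₀ hRpos.ne']⟩
  have e1 : ∀ s : ι → Bool, ‖∑ i, sgn (s i) • R⁻¹ • x i‖ ^ p = (R⁻¹) ^ p * ‖∑ i, sgn (s i) • x i‖ ^ p := by
    intro s
    rw [← Real.mul_rpow (by positivity) (norm_nonneg _)]
    congr 1
    rw [Finset.sum_congr rfl (fun i _ => smul_comm (sgn (s i)) R⁻¹ (x i)), ← Finset.smul_sum, norm_smul,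
      Real.norm_of_nonneg (by positivity)]
  have e2 : ∀ i, ‖R⁻¹ • x i‖ ^ p = (R⁻¹) ^ p * ‖x i‖ ^ p := by
    intro i
    rw [hnorm, Real.mul_rpow (by positivity) (norm_nonneg _)]
  simp only [e1, e2, ← Finset.mul_sum] at h1
  have hRp : 0 < (R⁻¹) ^ p := by positivity
  refine le_of_mul_le_mul_left ?_ hRp
  linarith

/-- Flatness for complex normed spaces, in homogeneous form. -/
def FlatC (Y : Type*) [NormedAddCommGroup Y] [NormedSpace ℂ Y] (ι : Type*) [Fintype ι] (δ : ℝ) : Prop :=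
  ∀ (y : ι → Y) (R : ℝ), 0 ≤ R → (∀ i, ‖y i‖ ≤ R) → ∃ s : ι → Bool,
    ‖∑ i, (sgn (s i) : ℂ) • y i‖ ≤ Fintype.card ι * (1 - δ) * R

lemma pilp_norm_rpow {p : ℝ} (hp : 1 < p) [Fact (1 ≤ ENNReal.ofReal p)] {Ω : Type*} [Fintype Ω]
    (y : PiLp (ENNReal.ofReal p) (fun _ : Ω => X)) : ‖y‖ ^ p = ∑ ω, ‖y ω‖ ^ p := by
  have hp' : (ENNReal.ofReal p).toReal = p := ENNReal.toReal_ofReal (by linarith)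
  rw [PiLp.norm_eq_sum (by rw [hp']; linarith), hp', ← Real.rpow_mul (Finset.sum_nonneg fun i _ => by positivity),
    one_div_mul_cancel (by linarith), Real.rpow_one]

lemma flat_pilp {ι : Type*} [Fintype ι] [DecidableEq ι] [Nonempty ι] {p δ : ℝ} (hp : 1 < p)
    [Fact (1 ≤ ENNReal.ofReal p)]
    (hδ : 0 < δ) (hδ1 : δ < 1) (hX : Flat X ι δ) : ∃ δ' : ℝ, 0 < δ' ∧ δ' ≤ 1 ∧
      ∀ n : ℕ, FlatC (PiLp (ENNReal.ofReal p) (fun _ : Fin n → Bool => X)) ι δ' := by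
  obtain ⟨κ, hκ0, hκ1, h⟩ := flat_lp hp hδ hδ1 hX
  have hκp : κ ^ (1 / p) < 1 := Real.rpow_lt_one hκ0 hκ1 (by positivity)
  have hκp0 : 0 ≤ κ ^ (1 / p) := by positivity
  refine ⟨1 - κ ^ (1 / p), by linarith, by linarith, fun n y R hR hy => ?_⟩
  set N : ℝ := (Fintype.card ι : ℝ) with hNdef
  have hN : 1 ≤ N := by
    rw [hNdef]; exact_mod_cast Fintype.card_pos
  have hcard : Fintype.card (ι → Bool) = 2 ^ (Fintype.card ι) := by simp
  have hsum : ∑ s : ι → Bool, ‖∑ i, (sgn (s i) : ℂ) • y i‖ ^ p ≤ ∑ s : ι → Bool, κ * (N * R) ^ p := by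
    simp only [pilp_norm_rpow hp]
    rw [Finset.sum_comm]
    have e : ∀ (ω : Fin n → Bool) (s : ι → Bool),
        (∑ i, (sgn (s i) : ℂ) • y i) ω = ∑ i, sgn (s i) • (y i) ω := by
      intro ω s
      simp
    simp only [e]
    calc _ ≤ ∑ ω : Fin n → Bool, κ * 2 ^ (Fintype.card ι) * N ^ (p - 1) * ∑ i, ‖y i ω‖ ^ p :=
          Finset.sum_le_sum fun ω _ => h (fun i => y i ω)
      _ = κ * 2 ^ (Fintype.card ι) * N ^ (p - 1) * ∑ i, ‖y i‖ ^ p := by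
          rw [← Finset.mul_sum, Finset.sum_comm]
          simp only [pilp_norm_rpow hp]
      _ ≤ κ * 2 ^ (Fintype.card ι) * N ^ (p - 1) * ∑ i : ι, R ^ p := by
          gcongr with i
          exact hy i
      _ = _ := by
          rw [Finset.sum_const, Finset.sum_const, Finset.card_univ, Finset.card_univ, hcard,
            Real.mul_rpow (by linarith) hR, Real.rpow_sub_one (by linarith)]
          simp only [nsmul_eq_mul]
          rw [← hNdef]
          push_cast
          field_simp
  obtain ⟨s, -, hs⟩ := Finset.exists_le_of_sum_le Finset.univ_nonempty hsum
  refine ⟨s, ?_⟩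
  have h1 := Real.rpow_le_rpow (by positivity) hs (by positivity : 0 ≤ 1 / p)
  rw [← Real.rpow_mul (norm_nonneg _), mul_one_div_cancel (by linarith), Real.rpow_one,
    Real.mul_rpow hκ0 (by positivity), ← Real.rpow_mul (by positivity), mul_one_div_cancel (by linarith),
    Real.rpow_one] at h1
  refine h1.trans (le_of_eq ?_)
  ring

lemma proj_bound {Y : Type*} [NormedAddCommGroup Y] [NormedSpace ℂ Y]
    {ι : Type*} [Fintype ι] [DecidableEq ι] [Nonempty ι] {δ : ℝ} (hδ1 : δ ≤ 1) (hY : FlatC Y ι δ)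
    (P : Finset ι → Y →L[ℂ] Y) (hP : ∀ A, ‖P A‖ ≤ 1) (hmul : ∀ A B, P (A ∪ B) = P A * P B) :
    ‖∑ A : Finset ι, (-1 : ℂ) ^ A.card • P A‖ ≤ 2 ^ (Fintype.card ι) - δ := by
  set N : ℝ := (Fintype.card ι : ℝ) with hNdef
  have hN : 1 ≤ N := by
    rw [hNdef]; exact_mod_cast Fintype.card_pos
  have hpow : (1:ℝ) ≤ 2 ^ (Fintype.card ι) := one_le_pow₀ (by norm_num)
  refine ContinuousLinearMap.opNorm_le_bound _ (by linarith) fun x => ?_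
  have hPx : ∀ A, ‖P A x‖ ≤ ‖x‖ := fun A => (P A).le_of_opNorm_le (hP A) x |>.trans (by simp)
  obtain ⟨s, hs⟩ := hY (fun i => P {i} x) ‖x‖ (norm_nonneg _) (fun i => hPx _)
  set A : Finset ι := Finset.univ.filter (fun i => s i = true) with hA
  set u : Finset ι → Y := fun B => (-1 : ℂ) ^ B.card • P B x with hu
  have hun : ∀ B, ‖u B‖ ≤ ‖x‖ := by
    intro B
    simp only [hu]
    rw [norm_smul]; simpa using hPx B
  have hT : (∑ B : Finset ι, (-1 : ℂ) ^ B.card • P B) x = ∑ B, u B := by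
    simp [hu]
  rw [hT]
  have hins : ∀ i, u (insert i A) = (-1 : ℂ) ^ A.card • P A ((sgn (s i) : ℂ) • P {i} x) := by
    intro i
    have e : P (insert i A) = P A * P {i} := by
      rw [← hmul, Finset.union_comm]; rfl
    simp only [hu, e]
    rw [mul_apply_eq_comp, map_smul, smul_smul]
    congr 1
    by_cases hi : s i = true
    · have : i ∈ A := by simp [hA, hi]
      rw [Finset.insert_eq_of_mem this]; simp [hi, sgn]
    · have : i ∉ A := by simp [hA, hi]
      rw [Finset.card_insert_of_notMem this, pow_succ]; simp [hi, sgn]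
  have h1 : ‖∑ i, u (insert i A)‖ ≤ N * (1 - δ) * ‖x‖ := by
    simp only [hins]
    rw [← Finset.smul_sum, ← map_sum, norm_smul]
    simp only [norm_pow, norm_neg, norm_one, one_pow, one_mul]
    refine ((P A).le_of_opNorm_le (hP A) _).trans ?_
    rw [one_mul]; exact hs
  have h2 : ∀ i, ‖∑ B ∈ Finset.univ.erase (insert i A), u B‖ ≤ (2 ^ (Fintype.card ι) - 1) * ‖x‖ := by
    intro i
    refine (norm_sum_le_of_le _ fun B _ => hun B).trans ?_
    rw [Finset.sum_const, Finset.card_erase_of_mem (Finset.mem_univ _), Finset.card_univ, Fintype.card_finset,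
      nsmul_eq_mul, Nat.cast_sub Nat.one_le_two_pow]
    simp
  have h3 : (Fintype.card ι : ℂ) • ∑ B, u B = ∑ i, u (insert i A) + ∑ i, ∑ B ∈ Finset.univ.erase (insert i A), u B := by
    rw [← Finset.sum_add_distrib]
    have : ∀ i, u (insert i A) + ∑ B ∈ Finset.univ.erase (insert i A), u B = ∑ B, u B := fun i =>
      Finset.add_sum_erase _ _ (Finset.mem_univ _)
    simp only [this]
    rw [Finset.sum_const, Finset.card_univ, Nat.cast_smul_eq_nsmul]
  have h4 : N * ‖∑ B, u B‖ ≤ N * (1 - δ) * ‖x‖ + N * ((2 ^ (Fintype.card ι) - 1) * ‖x‖) := by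
    have : N * ‖∑ B, u B‖ = ‖(Fintype.card ι : ℂ) • ∑ B, u B‖ := by
      rw [norm_smul]; simp [hNdef]
    rw [this, h3]
    refine (norm_add_le _ _).trans (add_le_add h1 ?_)
    refine (norm_sum_le_of_le _ fun i _ => h2 i).trans ?_
    rw [Finset.sum_const, Finset.card_univ, nsmul_eq_mul]
  refine le_of_mul_le_mul_left (h4.trans (le_of_eq ?_)) (by linarith : 0 < N)
  ring

end Geometry

section Cube
set_option linter.unusedSectionVars false
set_option linter.unnecessarySeqFocus false

lemma sgn_mul_self (b : Bool) : sgn b * sgn b = 1 := by cases b <;> simp [sgn]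

lemma walsh_sum_sets {n : ℕ} (ε δ : Fin n → Bool) :
    ∑ A : Finset (Fin n), walsh A ε * walsh A δ = if ε = δ then 2 ^ n else 0 := by
  have h : ∀ A : Finset (Fin n), walsh A ε * walsh A δ = ∏ i ∈ A, sgn (ε i) * sgn (δ i) := by
    intro A; simp [walsh, Finset.prod_mul_distrib]
  simp only [h]
  rw [← Finset.powerset_univ, ← Finset.prod_one_add]
  split_ifs with he
  · subst he; simp [sgn_mul_self]; norm_num
  · obtain ⟨i, hi⟩ := Function.ne_iff.1 he
    apply Finset.prod_eq_zero (Finset.mem_univ i)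
    revert hi
    cases ε i <;> cases δ i <;> simp [sgn]

lemma walsh_sum_points {n : ℕ} (A B : Finset (Fin n)) :
    ∑ ε : Fin n → Bool, walsh A ε * walsh B ε = if A = B then 2 ^ n else 0 := by
  have h : ∀ ε : Fin n → Bool, walsh A ε * walsh B ε
      = ∏ i, ((if i ∈ A then sgn (ε i) else 1) * (if i ∈ B then sgn (ε i) else 1)) := by
    intro ε
    rw [Finset.prod_mul_distrib]
    simp [walsh]
  simp only [h]
  have h2 := Finset.prod_univ_sum (fun _ : Fin n => (Finset.univ : Finset Bool))
    (fun i b => ((if i ∈ A then sgn b else 1) * (if i ∈ B then sgn b else 1) : ℝ))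
  rw [Fintype.piFinset_univ] at h2
  rw [← h2]
  split_ifs with he
  · subst he
    have : ∀ i : Fin n, ∑ b : Bool, ((if i ∈ A then sgn b else 1) * (if i ∈ A then sgn b else 1) : ℝ) = 2 := by
      intro i
      by_cases hi : i ∈ A <;> simp [hi, sgn] <;> norm_num
    simp only [this]; simp
  · have : ∃ i, ¬ (i ∈ A ↔ i ∈ B) := by
      by_contra hcon; push Not at hcon; exact he (Finset.ext hcon)
    obtain ⟨i, hi⟩ := this
    apply Finset.prod_eq_zero (Finset.mem_univ i)
    by_cases hA : i ∈ A <;> by_cases hB : i ∈ B <;> simp [hA, hB, sgn] at hi ⊢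

lemma walsh_inversion {n : ℕ} (f : (Fin n → Bool) → X) (ε : Fin n → Bool) :
    ∑ A : Finset (Fin n), walsh A ε • coeff f A = f ε := by
  unfold coeff
  simp only [Finset.smul_sum, smul_smul]
  rw [Finset.sum_comm]
  have : ∀ δ : Fin n → Bool, ∑ A : Finset (Fin n), (walsh A ε * ((2 ^ n)⁻¹ * walsh A δ)) • f δ
      = (if ε = δ then (1:ℝ) else 0) • f δ := by
    intro δ
    rw [← Finset.sum_smul]
    congr 1
    calc _ = (2 ^ n)⁻¹ * ∑ A : Finset (Fin n), walsh A ε * walsh A δ := by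
          rw [Finset.mul_sum]; exact Finset.sum_congr rfl fun A _ => by ring
      _ = _ := by rw [walsh_sum_sets]; split_ifs <;> simp
  simp only [this]
  simp

lemma coeff_walsh {n : ℕ} (A B : Finset (Fin n)) (x : X) :
    coeff (fun ε => walsh A ε • x) B = (if A = B then (1:ℝ) else 0) • x := by
  unfold coeff
  simp only [smul_smul]
  rw [← Finset.sum_smul, smul_smul]
  congr 1
  calc _ = (2 ^ n)⁻¹ * ∑ ε : Fin n → Bool, walsh A ε * walsh B ε := by
        congr 1; exact Finset.sum_congr rfl fun A _ => by ring
    _ = _ := by rw [walsh_sum_points]; split_ifs <;> simp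

variable (X) in
/-- The Banach space `L_p` of functions on the cube (unnormalised). -/
abbrev LpC (p : ℝ) (n : ℕ) : Type _ := PiLp (ENNReal.ofReal p) (fun _ : Fin n → Bool => X)

variable {p : ℝ} [Fact (1 ≤ ENNReal.ofReal p)] {n : ℕ}

/-- The projection onto the `A`-th Walsh component. -/
def comp (A : Finset (Fin n)) : LpC X p n →L[ℂ] LpC X p n :=
  ((PiLp.continuousLinearEquiv (ENNReal.ofReal p) ℂ (fun _ : Fin n → Bool => X)).symm :
      ((Fin n → Bool) → X) →L[ℂ] LpC X p n).comp
    ((ContinuousLinearMap.pi (fun ε : Fin n → Bool =>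
      ((walsh A ε * (2 ^ n : ℝ)⁻¹ : ℝ) : ℂ) • ∑ δ : Fin n → Bool, ((walsh A δ : ℝ) : ℂ) •
        ContinuousLinearMap.proj (R := ℂ) (φ := fun _ : Fin n → Bool => X) δ)).comp
    ((PiLp.continuousLinearEquiv (ENNReal.ofReal p) ℂ (fun _ : Fin n → Bool => X)) :
      LpC X p n →L[ℂ] ((Fin n → Bool) → X)))

lemma comp_apply (A : Finset (Fin n)) (f : LpC X p n) (ε : Fin n → Bool) :
    comp A f ε = walsh A ε • coeff f.ofLp A := by
  simp only [comp, coeff]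
  simp [smul_smul]
  rw [← Complex.coe_smul (walsh A ε * (2 ^ n)⁻¹)]
  push_cast
  rfl

lemma comp_ofLp (A : Finset (Fin n)) (f : LpC X p n) :
    (comp A f).ofLp = fun ε => walsh A ε • coeff f.ofLp A := by
  funext ε; exact comp_apply A f ε

lemma comp_mul (A B : Finset (Fin n)) :
    (comp A * comp B : LpC X p n →L[ℂ] LpC X p n) = if A = B then comp A else 0 := by
  ext f ε
  rw [mul_apply_eq_comp, comp_apply, comp_ofLp, coeff_walsh]
  by_cases h : A = B
  · subst h; simp [comp_apply]
  · have h' : ¬ B = A := fun e => h e.symm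
    simp [h, h']

lemma comp_sum : (∑ A : Finset (Fin n), comp A : LpC X p n →L[ℂ] LpC X p n) = 1 := by
  ext f ε
  simp [comp_apply, walsh_inversion]

/-- Multipliers along a complete family of orthogonal idempotents. -/
def multHom {ι B : Type*} [Fintype ι] [DecidableEq ι] [Ring B] [Algebra ℂ B] (E : ι → B)
    (h1 : ∑ i, E i = 1) (h2 : ∀ i j, E i * E j = if i = j then E i else 0) : (ι → ℂ) →ₐ[ℂ] B :=
  AlgHom.ofLinearMap
    { toFun := fun m => ∑ A, m A • E A
      map_add' := fun a b => by simp [add_smul, Finset.sum_add_distrib]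
      map_smul' := fun a b => by simp [Finset.smul_sum, smul_smul] }
    (by simp [h1])
    (by
      intro a b
      simp only [LinearMap.coe_mk, AddHom.coe_mk, Pi.mul_apply]
      rw [Finset.sum_mul_sum]
      simp only [smul_mul_smul_comm, h2]
      simp)

lemma multHom_apply {ι B : Type*} [Fintype ι] [DecidableEq ι] [Ring B] [Algebra ℂ B] (E : ι → B)
    (h1 : ∑ i, E i = 1) (h2 : ∀ i j, E i * E j = if i = j then E i else 0) (m : ι → ℂ) :
    multHom E h1 h2 m = ∑ A, m A • E A := rfl

lemma multHom_clm_apply {ι Y : Type*} [Fintype ι] [DecidableEq ι] [NormedAddCommGroup Y] [NormedSpace ℂ Y]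
    (E : ι → Y →L[ℂ] Y)
    (h1 : ∑ i, E i = 1) (h2 : ∀ i j, E i * E j = if i = j then E i else 0) (m : ι → ℂ) (y : Y) :
    multHom E h1 h2 m y = ∑ A, m A • E A y := by
  rw [multHom_apply]; simp

variable (X p n) in
/-- The algebra of Walsh multipliers. -/
def op : (Finset (Fin n) → ℂ) →ₐ[ℂ] (LpC X p n →L[ℂ] LpC X p n) :=
  multHom comp comp_sum comp_mul

lemma op_apply (m : Finset (Fin n) → ℂ) (f : LpC X p n) (ε : Fin n → Bool) :
    op X p n m f ε = ∑ A, m A • walsh A ε • coeff f.ofLp A := by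
  have h := multHom_clm_apply (Y := LpC X p n) comp comp_sum comp_mul m f
  rw [op, h, WithLp.ofLp_sum, Finset.sum_apply]
  refine Finset.sum_congr rfl fun A _ => ?_
  rw [PiLp.smul_apply, comp_apply]

/-- Flipping one coordinate. -/
def flip (i : Fin n) (ε : Fin n → Bool) : Fin n → Bool := Function.update ε i (!(ε i))

lemma flip_flip (i : Fin n) (ε : Fin n → Bool) : flip i (flip i ε) = ε := by
  simp [flip]

/-- The flip as an equivalence. -/
def flipE (i : Fin n) : (Fin n → Bool) ≃ (Fin n → Bool) := ⟨flip i, flip i, flip_flip i, flip_flip i⟩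

lemma walsh_flip (i : Fin n) (A : Finset (Fin n)) (ε : Fin n → Bool) :
    walsh A (flip i ε) = (if i ∈ A then -1 else 1) * walsh A ε := by
  unfold walsh
  split_ifs with h
  · rw [← Finset.mul_prod_erase _ _ h, ← Finset.mul_prod_erase _ (fun j => sgn (ε j)) h, ← mul_assoc]
    congr 1
    · simp only [flip, Function.update_self]
      cases ε i <;> simp [sgn]
    · refine Finset.prod_congr rfl fun j hj => ?_
      rw [flip, Function.update_of_ne (Finset.ne_of_mem_erase hj)]
  · rw [one_mul]
    refine Finset.prod_congr rfl fun j hj => ?_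
    rw [flip, Function.update_of_ne]
    rintro rfl; exact h hj

/-- The multiplier of a coordinate flip. -/
def sig (i : Fin n) : Finset (Fin n) → ℂ := fun A => if i ∈ A then -1 else 1

/-- The multiplier of the conditional expectation averaging out the coordinates in `A`. -/
def chi (A : Finset (Fin n)) : Finset (Fin n) → ℂ := fun B => if Disjoint A B then 1 else 0

lemma norm_op_sig (hp : 1 < p) (i : Fin n) : ‖op X p n (sig i)‖ ≤ 1 := by
  refine ContinuousLinearMap.opNorm_le_bound _ zero_le_one fun f => ?_
  rw [one_mul]
  have h1 : ∀ ε, op X p n (sig i) f ε = f (flip i ε) := by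
    intro ε
    rw [op_apply, ← walsh_inversion f.ofLp (flip i ε)]
    refine Finset.sum_congr rfl fun A _ => ?_
    rw [walsh_flip, sig]
    split_ifs <;> simp
  have h2 : ‖op X p n (sig i) f‖ ^ p = ‖f‖ ^ p := by
    rw [pilp_norm_rpow hp, pilp_norm_rpow hp]
    simp only [h1]
    exact (flipE i).sum_comp (fun ε => ‖f ε‖ ^ p)
  exact (Real.rpow_le_rpow_iff (norm_nonneg _) (norm_nonneg _) (by linarith)).1 h2.le

lemma norm_op_one : ‖op X p n 1‖ ≤ 1 := by
  rw [map_one]; exact ContinuousLinearMap.norm_id_le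

lemma norm_op_chi_singleton (hp : 1 < p) (i : Fin n) : ‖op X p n (chi {i})‖ ≤ 1 := by
  have : chi {i} = (1/2 : ℂ) • (1 + sig i) := by
    funext A
    by_cases h : i ∈ A <;> simp [chi, sig, h] <;> norm_num
  rw [this, map_smul, map_add, norm_smul]
  have h := (norm_add_le (op X p n 1) (op X p n (sig i))).trans (add_le_add norm_op_one (norm_op_sig hp i))
  have : ‖(1/2 : ℂ)‖ = 1/2 := by simp
  rw [this]; linarith

lemma chi_union (A B : Finset (Fin n)) : chi (A ∪ B) = chi A * chi B := by
  funext C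
  simp only [chi, Pi.mul_apply, Finset.disjoint_union_left]
  by_cases h1 : Disjoint A C <;> by_cases h2 : Disjoint B C <;> simp [h1, h2]

lemma chi_empty : chi (∅ : Finset (Fin n)) = 1 := by
  funext C; simp [chi]

lemma norm_op_chi (hp : 1 < p) (A : Finset (Fin n)) : ‖op X p n (chi A)‖ ≤ 1 := by
  induction A using Finset.induction_on with
  | empty => rw [chi_empty]; exact norm_op_one
  | insert i A hi ih =>
    rw [Finset.insert_eq, chi_union, map_mul]
    refine (norm_mul_le _ _).trans ?_
    exact mul_le_one₀ (norm_op_chi_singleton hp i) (norm_nonneg _) ih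

/-- Binomial weights. -/
def wt (q : ℝ) (A : Finset (Fin n)) : ℝ := (∏ _i ∈ A, (1 - q)) * ∏ _i ∈ Finset.univ \ A, q

lemma wt_nonneg {q : ℝ} (h0 : 0 ≤ q) (h1 : q ≤ 1) (A : Finset (Fin n)) : 0 ≤ wt q A :=
  mul_nonneg (Finset.prod_nonneg fun _ _ => by linarith) (Finset.prod_nonneg fun _ _ => h0)

lemma wt_sum (q : ℝ) : ∑ A : Finset (Fin n), wt q A = 1 := by
  have := Finset.prod_add (fun _ : Fin n => 1 - q) (fun _ => q) Finset.univ
  rw [Finset.powerset_univ] at this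
  unfold wt
  rw [← this]; simp

lemma chi_prod (A B : Finset (Fin n)) : chi A B = ∏ i ∈ A, (if i ∈ B then 0 else 1) := by
  unfold chi
  split_ifs with h
  · symm; apply Finset.prod_eq_one
    intro i hi
    rw [if_neg (Finset.disjoint_left.1 h hi)]
  · rw [Finset.not_disjoint_iff] at h
    obtain ⟨i, hi, hB⟩ := h
    symm; exact Finset.prod_eq_zero hi (by simp [hB])

lemma pow_eq_avg (q : ℝ) : (fun B : Finset (Fin n) => (q : ℂ) ^ B.card) = ∑ A, (wt q A : ℂ) • chi A := by
  funext B
  have := Finset.prod_add (fun i : Fin n => (1 - q : ℂ) * (if i ∈ B then 0 else 1)) (fun _ => (q:ℂ)) Finset.univ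
  rw [Finset.powerset_univ] at this
  rw [Finset.sum_apply]
  have e : ∀ A : Finset (Fin n), ((wt q A : ℂ) • chi A) B
      = (∏ i ∈ A, (1 - q : ℂ) * (if i ∈ B then 0 else 1)) * ∏ i ∈ Finset.univ \ A, (q:ℂ) := by
    intro A
    simp only [Pi.smul_apply, smul_eq_mul, chi_prod, wt, Finset.prod_mul_distrib]
    push_cast
    ring
  simp only [e]
  rw [← this]
  have e2 : ∀ i, ((1 - q : ℂ) * (if i ∈ B then 0 else 1) + q) = if i ∈ B then (q:ℂ) else 1 := by
    intro i; split_ifs <;> simp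
  simp only [e2]
  simp

lemma exp_eq_avg (t : ℝ) : (fun B : Finset (Fin n) => Complex.exp (-((t:ℂ) * ((B.card : ℝ) : ℂ))))
    = ∑ A, (wt (Real.exp (-t)) A : ℂ) • chi A := by
  rw [← pow_eq_avg]
  funext B
  push_cast
  rw [← Complex.exp_nat_mul]; ring_nf

variable (X p n) in
/-- The analytic heat semigroup on `L_p`. -/
def hs (z : ℂ) : LpC X p n →L[ℂ] LpC X p n :=
  semi (op X p n) (fun A : Finset (Fin n) => (A.card : ℝ)) z

lemma hs_contr (hp : 1 < p) (t : ℝ) (ht : 0 ≤ t) : ‖hs X p n t‖ ≤ 1 := by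
  have hq0 : 0 ≤ Real.exp (-t) := (Real.exp_pos _).le
  have hq1 : Real.exp (-t) ≤ 1 := Real.exp_le_one_iff.2 (by linarith)
  unfold hs semi
  rw [exp_eq_avg, map_sum]
  rw [← wt_sum (n := n) (Real.exp (-t))]
  refine norm_sum_le_of_le _ fun A _ => ?_
  rw [map_smul, norm_smul, Complex.norm_real, Real.norm_of_nonneg (wt_nonneg hq0 hq1 A)]
  exact mul_le_of_le_one_right (wt_nonneg hq0 hq1 A) (norm_op_chi hp A)

lemma chi_biUnion {ι : Type*} [DecidableEq ι] (a : ι → Finset (Fin n)) (T : Finset ι) :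
    chi (T.biUnion a) = ∏ j ∈ T, chi (a j) := by
  induction T using Finset.induction_on with
  | empty => simp [chi_empty]
  | insert i A hi ih => rw [Finset.biUnion_insert, chi_union, ih, Finset.prod_insert hi]

lemma hs_pow (hp : 1 < p) {ι : Type*} [Fintype ι] [DecidableEq ι] [Nonempty ι] {δ : ℝ} (hδ1 : δ ≤ 1)
    (hY : FlatC (LpC X p n) ι δ) (t : ℝ) (ht : 0 ≤ t) :
    ‖(1 - hs X p n t) ^ (Fintype.card ι)‖ ≤ 2 ^ (Fintype.card ι) - δ := by
  set q := Real.exp (-t) with hq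
  have hq0 : 0 ≤ q := (Real.exp_pos _).le
  have hq1 : q ≤ 1 := Real.exp_le_one_iff.2 (by linarith)
  have e1 : (1 - hs X p n t) = op X p n (∑ A, (wt q A : ℂ) • (1 - chi A)) := by
    unfold hs semi
    rw [exp_eq_avg, ← map_one (op X p n), ← map_sub]
    congr 1
    simp only [smul_sub, Finset.sum_sub_distrib]
    rw [← Finset.sum_smul]
    congr 1
    rw [← Complex.ofReal_sum, wt_sum]; simp
  have e2 : (∑ A : Finset (Fin n), (wt q A : ℂ) • (1 - chi A)) ^ (Fintype.card ι)
      = ∑ a : ι → Finset (Fin n), ((∏ j, wt q (a j) : ℝ) : ℂ) • ∏ j, (1 - chi (a j)) := by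
    have := Finset.prod_univ_sum (fun _ : ι => (Finset.univ : Finset (Finset (Fin n))))
      (fun _ A => (wt q A : ℂ) • (1 - chi A))
    rw [Fintype.piFinset_univ, Finset.prod_const, Finset.card_univ] at this
    rw [this]
    refine Finset.sum_congr rfl fun a _ => ?_
    rw [Finset.prod_smul]; push_cast; rfl
  have e3 : ∑ a : ι → Finset (Fin n), (∏ j, wt q (a j)) = 1 := by
    have := Finset.prod_univ_sum (fun _ : ι => (Finset.univ : Finset (Finset (Fin n))))
      (fun _ A => wt q A)
    rw [Fintype.piFinset_univ] at this
    rw [← this, wt_sum]; simp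
  have hb : ∀ a : ι → Finset (Fin n), ‖op X p n (∏ j, (1 - chi (a j)))‖ ≤ 2 ^ (Fintype.card ι) - δ := by
    intro a
    have h1 : ∏ j, (1 - chi (a j)) = ∑ T : Finset ι, (-1 : ℂ) ^ T.card • chi (T.biUnion a) := by
      simp only [sub_eq_add_neg]
      rw [Finset.prod_one_add, Finset.powerset_univ]
      refine Finset.sum_congr rfl fun T _ => ?_
      rw [Finset.prod_neg, chi_biUnion]
      funext B
      simp
    rw [h1, map_sum]
    simp only [map_smul]
    exact proj_bound hδ1 hY (fun T => op X p n (chi (T.biUnion a))) (fun T => norm_op_chi hp _)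
      (fun A B => by rw [Finset.union_biUnion, chi_union, map_mul])
  rw [e1, ← map_pow, e2, map_sum]
  have : (2:ℝ) ^ (Fintype.card ι) - δ = ∑ a : ι → Finset (Fin n), (∏ j, wt q (a j)) * (2 ^ (Fintype.card ι) - δ) := by
    rw [← Finset.sum_mul, e3, one_mul]
  rw [this]
  refine norm_sum_le_of_le _ fun a _ => ?_
  have hw : 0 ≤ ∏ j, wt q (a j) := Finset.prod_nonneg fun j _ => wt_nonneg hq0 hq1 _
  rw [map_smul, norm_smul, Complex.norm_real, Real.norm_of_nonneg hw]
  exact mul_le_mul_of_nonneg_left (hb a) hw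

lemma multHom_mul {ι B : Type*} [Fintype ι] [DecidableEq ι] [Ring B] [Algebra ℂ B] (E : ι → B)
    (h1 : ∑ i, E i = 1) (h2 : ∀ i j, E i * E j = if i = j then E i else 0) (m : ι → ℂ) (i : ι) :
    E i * multHom E h1 h2 m = m i • E i := by
  rw [multHom_apply, Finset.mul_sum]
  simp [h2]

lemma multHom_vanish {ι Y : Type*} [Fintype ι] [DecidableEq ι] [NormedAddCommGroup Y] [NormedSpace ℂ Y]
    (E : ι → Y →L[ℂ] Y)
    (h1 : ∑ i, E i = 1) (h2 : ∀ i j, E i * E j = if i = j then E i else 0) (m : ι → ℂ) (i : ι) (y : Y)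
    (hy : E i y = 0) : E i (multHom E h1 h2 m y) = 0 := by
  have := congrArg (fun T : Y →L[ℂ] Y => T y) (multHom_mul E h1 h2 m i)
  simp only [mul_apply_eq_comp] at this
  rw [this]; simp [hy]

lemma group_by_card {Y : Type*} [NormedAddCommGroup Y] [NormedSpace ℂ Y] (d : ℕ)
    (u : Finset (Fin n) → Y) (hu : ∀ A, d < A.card → u A = 0) (w : ℂ) :
    ∑ A : Finset (Fin n), Complex.exp (-(w * ((A.card : ℝ) : ℂ))) • u A
      = ∑ k ∈ Finset.range (d + 1), Complex.exp (-(k * w)) • ∑ A ∈ Finset.univ.filter (fun A => A.card = k), u A := by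
  have h1 : ∑ A : Finset (Fin n), Complex.exp (-(w * ((A.card : ℝ) : ℂ))) • u A
      = ∑ A ∈ Finset.univ.filter (fun A : Finset (Fin n) => A.card ≤ d), Complex.exp (-(w * ((A.card : ℝ) : ℂ))) • u A := by
    symm
    apply Finset.sum_filter_of_ne
    intro A _ hA
    by_contra hcon
    exact hA (by rw [hu A (not_le.1 hcon), smul_zero])
  rw [h1, ← Finset.sum_fiberwise_of_maps_to (s := Finset.univ.filter (fun A : Finset (Fin n) => A.card ≤ d))
    (t := Finset.range (d + 1)) (g := fun A => A.card) (by
      intro A hA; simp at hA ⊢; omega)]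
  refine Finset.sum_congr rfl fun k hk => ?_
  rw [Finset.smul_sum]
  have hk' : k < d + 1 := Finset.mem_range.1 hk
  refine Finset.sum_congr ?_ ?_
  · ext A; simp; omega
  · intro A hA
    simp at hA
    rw [hA]; push_cast; ring_nf

/-- Spectral form of the degree condition. -/
def degY (f : LpC X p n) (d : ℕ) : Prop := ∀ A : Finset (Fin n), d < A.card → comp A f = 0

lemma hs_zero (f : LpC X p n) : hs X p n 0 f = f := by
  rw [hs, semi_zero]; rfl

lemma hs_add (z w : ℂ) (f : LpC X p n) : hs X p n (z + w) f = hs X p n z (hs X p n w f) := by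
  rw [hs, semi_add]; rfl

lemma degY_hs (f : LpC X p n) (d : ℕ) (hf : degY f d) (z : ℂ) : degY (hs X p n z f) d := by
  intro A hA
  exact multHom_vanish (Y := LpC X p n) comp comp_sum comp_mul _ A f (hf A hA)

lemma hs_expand (f : LpC X p n) (d : ℕ) (hf : degY f d) (w : ℂ) :
    hs X p n w f = ∑ k ∈ Finset.range (d + 1), Complex.exp (-(k * w)) •
      ∑ A ∈ Finset.univ.filter (fun A : Finset (Fin n) => A.card = k), comp A f := by
  have h1 := group_by_card d (fun A => comp A f) hf w
  have h2 := multHom_clm_apply (Y := LpC X p n) comp comp_sum comp_mul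
    (fun A => Complex.exp (-(w * ((A.card : ℝ) : ℂ)))) f
  exact h2.trans h1

lemma exp_reassemble {Y : Type*} [NormedAddCommGroup Y] [NormedSpace ℂ Y] (d : ℕ) (F : ℕ → Y) (t z : ℂ) :
    ∑ k ∈ Finset.range (d + 1), Complex.exp (-(k * z)) • Complex.exp (-(k * t)) • F k
      = ∑ k ∈ Finset.range (d + 1), Complex.exp (-(k * (z + t))) • F k := by
  refine Finset.sum_congr rfl fun k _ => ?_
  rw [smul_smul, ← Complex.exp_add]
  congr 2; ring

lemma small_time [CompleteSpace X] (hX : KConvex X) (hp : 1 < p) :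
    ∃ C η : ℝ, 0 < C ∧ 1 / 2 < η ∧ η ≤ 1 ∧ ∀ (n d : ℕ) (f : LpC X p n), degY f d →
      ∀ t : ℝ, 0 < t → t < 1 → ‖f‖ ≤ 2 * Real.exp (C * d * t ^ η) * ‖hs X p n t f‖ := by
  obtain ⟨m, δ, hδ, hδ1, hflat⟩ := flat_of_kconvex hX
  obtain ⟨β, hβ, hβ1, hY⟩ := flat_pilp hp hδ hδ1 hflat
  set N := Fintype.card (Fin m → Bool) with hN
  obtain ⟨C, η, hC, hη, hη1, hmain⟩ := expPoly_bound (δ0 N β) (δ0_pos N β hβ) (δ0_le N β hβ)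
  refine ⟨C, η, hC, hη, hη1, fun n d f hf t ht ht1 => ?_⟩
  have hsec : ∀ z ∈ Sect (δ0 N β), ‖hs X p n z‖ ≤ 2 := fun z hz =>
    semi_sector (op X p n) (fun A : Finset (Fin n) => (A.card : ℝ)) (fun A => Nat.cast_nonneg _)
      (fun t ht => hs_contr hp t ht) N β hβ (fun t ht => hs_pow hp hβ1 (hY n) t ht) z hz
  set F : ℕ → LpC X p n := fun k => ∑ A ∈ Finset.univ.filter (fun A : Finset (Fin n) => A.card = k), comp A f with hF
  have hexp : ∀ w : ℂ, hs X p n w f = ∑ k ∈ Finset.range (d + 1), Complex.exp (-(k * w)) • F k :=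
    fun w => hs_expand f d hf w
  have h := hmain (LpC X p n) d (fun k => Complex.exp (-(k * (t:ℂ))) • F k) (2 * ‖hs X p n t f‖) (by
    intro z hz
    have e := exp_reassemble d F (t:ℂ) z
    rw [← hexp, hs_add] at e
    rw [e]
    exact (hs X p n z).le_of_opNorm_le (hsec z hz) _) t ht ht1
  have e2 := exp_reassemble d F (t:ℂ) (-(t:ℂ))
  rw [neg_add_cancel, ← hexp, hs_zero] at e2
  have e3 : ∀ k : ℕ, -((k:ℂ) * -(t:ℂ)) = k * t := fun k => by ring
  simp only [e3] at e2
  rw [e2] at h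
  linarith

lemma all_time [CompleteSpace X] (hX : KConvex X) (hp : 1 < p) :
    ∃ C η : ℝ, 0 < C ∧ 1 / 2 < η ∧ η ≤ 1 ∧ ∀ (n d : ℕ), 1 ≤ d → ∀ (f : LpC X p n), degY f d →
      ∀ t : ℝ, 0 ≤ t → ‖f‖ ≤ 2 * Real.exp (C * d * max t (t ^ η)) * ‖hs X p n t f‖ := by
  obtain ⟨C, η, hC, hη, hη1, hsm⟩ := small_time hX hp
  refine ⟨3 * (C + 1), η, by positivity, hη, hη1, fun n d hd f hf t ht => ?_⟩
  have hd1 : (1:ℝ) ≤ d := by exact_mod_cast hd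
  have hm0 : 0 ≤ max t (t ^ η) := le_max_of_le_left ht
  rcases ht.eq_or_lt with rfl | ht0
  · rw [Complex.ofReal_zero, hs_zero]
    have h1 : 1 ≤ Real.exp (3 * (C + 1) * d * max 0 (0 ^ η)) := Real.one_le_exp (by positivity)
    have := norm_nonneg f
    nlinarith
  rcases lt_or_ge t 1 with ht1 | ht1
  · refine (hsm n d f hf t ht0 ht1).trans ?_
    gcongr
    · linarith
    · exact le_max_right _ _
  · set K : ℝ := Real.exp ((C + 1) * d) with hK
    have hstep : ∀ g : LpC X p n, degY g d → ‖g‖ ≤ K * ‖hs X p n ((1/2 : ℝ) : ℂ) g‖ := by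
      intro g hg
      refine (hsm n d g hg (1/2) (by norm_num) (by norm_num)).trans ?_
      gcongr
      have h2 : (2:ℝ) ≤ Real.exp d := by
        have := Real.add_one_le_exp (d:ℝ); linarith
      have h3 : ((1:ℝ)/2) ^ η ≤ 1 := Real.rpow_le_one (by norm_num) (by norm_num) (by linarith)
      rw [hK, show (C + 1) * (d:ℝ) = d + C * d by ring, Real.exp_add]
      have h8 : C * d * (1 / 2) ^ η ≤ C * d := mul_le_of_le_one_right (by positivity) h3
      exact mul_le_mul h2 (Real.exp_le_exp.2 h8) (Real.exp_pos _).le (Real.exp_pos _).le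
    have hiter : ∀ k : ℕ, ∀ g : LpC X p n, degY g d → ‖g‖ ≤ K ^ k * ‖hs X p n ((k / 2 : ℝ) : ℂ) g‖ := by
      intro k
      induction k with
      | zero => intro g _; simp [hs_zero]
      | succ k ih =>
        intro g hg
        have h1 := ih _ (degY_hs g d hg ((1/2 : ℝ) : ℂ))
        rw [← hs_add, ← Complex.ofReal_add, show (k / 2 + 1 / 2 : ℝ) = ((k + 1 : ℕ) : ℝ) / 2 by push_cast; ring] at h1
        calc ‖g‖ ≤ K * ‖hs X p n ((1/2 : ℝ) : ℂ) g‖ := hstep g hg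
          _ ≤ K * (K ^ k * _) := by gcongr
          _ = _ := by rw [pow_succ]; ring
    set k := ⌈2 * t⌉₊ with hk
    have hk1 : 2 * t ≤ k := Nat.le_ceil _
    have hk2 : (k:ℝ) < 2 * t + 1 := Nat.ceil_lt_add_one (by linarith)
    have h4 := hiter k f hf
    have h5 : ‖hs X p n ((k / 2 : ℝ) : ℂ) f‖ ≤ ‖hs X p n t f‖ := by
      have e : ((k / 2 : ℝ) : ℂ) = ((k / 2 - t : ℝ) : ℂ) + t := by push_cast; ring
      rw [e, hs_add]
      refine ((hs X p n ((k / 2 - t : ℝ) : ℂ)).le_of_opNorm_le (hs_contr hp _ (by linarith)) _).trans ?_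
      rw [one_mul]
    have h6 : K ^ k ≤ Real.exp (3 * (C + 1) * d * max t (t ^ η)) := by
      rw [hK, ← Real.exp_nat_mul]
      apply Real.exp_le_exp.2
      have h7 : (k:ℝ) ≤ 3 * max t (t ^ η) := by
        have := le_max_left t (t ^ η); linarith
      calc (k:ℝ) * ((C + 1) * d) ≤ (3 * max t (t ^ η)) * ((C + 1) * d) := by gcongr
        _ = _ := by ring
    calc ‖f‖ ≤ K ^ k * ‖hs X p n ((k / 2 : ℝ) : ℂ) f‖ := h4
      _ ≤ Real.exp (3 * (C + 1) * d * max t (t ^ η)) * ‖hs X p n t f‖ := by gcongr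
      _ ≤ 2 * Real.exp (3 * (C + 1) * d * max t (t ^ η)) * ‖hs X p n t f‖ := by
        gcongr
        linarith [Real.exp_pos (3 * (C + 1) * d * max t (t ^ η))]

lemma lpNorm_eq (hp : 1 < p) (f : (Fin n → Bool) → X) :
    lpNorm p f = ((2 ^ n : ℝ)⁻¹) ^ (1 / p) * ‖(WithLp.toLp _ f : LpC X p n)‖ := by
  have h := pilp_norm_rpow hp (WithLp.toLp _ f : LpC X p n)
  unfold lpNorm
  rw [Real.mul_rpow (by positivity) (Finset.sum_nonneg fun i _ => by positivity)]
  congr 1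
  have h2 : ∑ ε, ‖f ε‖ ^ p = ‖(WithLp.toLp _ f : LpC X p n)‖ ^ p := h.symm
  rw [h2, ← Real.rpow_mul (norm_nonneg _), mul_one_div_cancel (by linarith), Real.rpow_one]

lemma heat_eq (t : ℝ) (f : (Fin n → Bool) → X) :
    (WithLp.toLp _ (heat t f) : LpC X p n) = hs X p n t (WithLp.toLp _ f) := by
  refine PiLp.ext fun ε => ?_
  rw [hs, semi, op_apply]
  show heat t f ε = _
  unfold heat
  refine Finset.sum_congr rfl fun A _ => ?_
  rw [← Complex.coe_smul (Real.exp (-t * A.card))]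
  congr 1
  push_cast
  ring_nf

lemma degY_of_degLE (f : (Fin n → Bool) → X) (d : ℕ) (hf : degLE f d) :
    degY (WithLp.toLp _ f : LpC X p n) d := by
  intro A hA
  refine PiLp.ext fun ε => ?_
  rw [comp_apply]
  show walsh A ε • coeff f A = 0
  rw [hf A hA, smul_zero]

end Cube

/-- **Improved lower bound on the decay of the heat semigroup** for `K`-convex targets. -/
theorem stmt6 {X : Type*} [NormedAddCommGroup X] [NormedSpace ℂ X] [CompleteSpace X]
    (hX : KConvex X) (p : ℝ) (hp : 1 < p) :
    ∃ c C : ℝ, 0 < c ∧ 0 < C ∧ ∃ η : ℝ, 1 / 2 < η ∧ η ≤ 1 ∧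
      ∀ n d : ℕ, 1 ≤ d → d ≤ n → ∀ f : (Fin n → Bool) → X, degLE f d → ∀ t : ℝ, 0 ≤ t →
        c * Real.exp (-(C * d * max t (t ^ η))) * lpNorm p f ≤
          lpNorm p (heat t f) := by
  haveI : Fact (1 ≤ ENNReal.ofReal p) := ⟨by rw [ENNReal.one_le_ofReal]; linarith⟩
  obtain ⟨C, η, hC, hη, hη1, h⟩ := all_time (p := p) hX hp
  refine ⟨1 / 2, C, by norm_num, hC, η, hη, hη1, fun n d hd _ f hf t ht => ?_⟩
  have h1 := h n d hd (WithLp.toLp _ f) (degY_of_degLE f d hf) t ht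
  rw [← heat_eq] at h1
  rw [lpNorm_eq hp, lpNorm_eq hp, Real.exp_neg]
  set E := Real.exp (C * d * max t (t ^ η)) with hE
  have hE0 : 0 < E := Real.exp_pos _
  set a := ‖(WithLp.toLp _ f : LpC X p n)‖
  set b := ‖(WithLp.toLp _ (heat t f) : LpC X p n)‖
  have h2 : 1 / 2 * E⁻¹ * a ≤ b := by
    rw [show 1 / 2 * E⁻¹ * a = a / (2 * E) by field_simp, div_le_iff₀ (by positivity)]
    linarith
  calc _ = ((2 ^ n : ℝ)⁻¹) ^ (1 / p) * (1 / 2 * E⁻¹ * a) := by ring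
    _ ≤ _ := by gcongr

end HammingCube
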